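/- arXiv:2501.06147 — 3 statements merged into one kernel-verified Lean document; each statement's English description precedes it below -/
import Mathlib

section
/- Let s ≥ 1/2. There exists a constant C = C(s) > 0 such that for all nonnegative sequences a, b, c : ℤ → [0,∞), the sequence F : ℤ → [0,∞] defined by F_0 = 0 and, for k ≠ 0, F_k = Σ |k|·a(k1)·b(k2)·c(k3)/|φ̃|, where the sum ranges over all triples (k1,k2,k3) ∈ Γ(k) with |k1| = max(|k|, |k1|, |k2|, |k3|), satisfies ‖F‖_{H^s} ≤ C·‖a‖_{H^{s−1/2}}·‖b‖_{H^s}·‖c‖_{H^s} (the inequality holding in [0,∞]). -/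
open scoped ENNReal

/-- The `H^s` norm of a sequence indexed by `ℤ`, with values in `[0,∞]`. -/
noncomputable def HsE (s : ℝ) (a : ℤ → ℝ≥0∞) : ℝ≥0∞ :=
  (∑' k : ℤ, ENNReal.ofReal ((1 + (k : ℝ) ^ 2) ^ s) * a k ^ 2) ^ (1 / 2 : ℝ)

/-!
Write `⟨x⟩ = (1 + x²)^(1/2)`. For fixed `k`, weighted Cauchy–Schwarz over `(x, y) = (k₂, k₃)`
reduces the estimate to a bound, uniform in `k`, for the sum over `(x, y)` of

  `⟨k⟩³ / (⟨k - x⟩² ⟨k - y⟩² ⟨x + y⟩² ⟨x⟩ ⟨y⟩)`,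

because `φ̃ = 3 (k - y) (k - x) (x + y)` and the `s`-dependent part of the weight at `k` is absorbed
by the one at `k₁`. One factor `⟨k⟩` is spent on each of the inequalities `⟨k⟩ ≤ ⟨k - x⟩ + ⟨x⟩`,
`⟨k⟩ ≤ ⟨k - y⟩ + ⟨y⟩` and `⟨k⟩ ≤ ⟨k - x⟩ + ⟨k - y⟩ + ⟨x + y⟩`; what remains is a sum of products
of square-summable functions of two independent variables among `x`, `y`, `x + y`.
-/

section ExtendedSums

theorem rpow_one_half_sq (z : ℝ≥0∞) : (z ^ (1 / 2 : ℝ)) ^ 2 = z := by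
  rw [← ENNReal.rpow_natCast, ← ENNReal.rpow_mul]
  norm_num

theorem sq_tsum_le_tsum_mul_tsum_of_sq_le_mul {ι : Type*} {t f g : ι → ℝ≥0∞}
    (h : ∀ i, t i ^ 2 ≤ f i * g i) : (∑' i, t i) ^ 2 ≤ (∑' i, f i) * ∑' i, g i := by
  have le_sqrt_mul_sqrt (i : ι) : t i ≤ f i ^ (1 / 2 : ℝ) * g i ^ (1 / 2 : ℝ) := by
    rw [← ENNReal.pow_le_pow_left_iff two_ne_zero, mul_pow, rpow_one_half_sq,
      rpow_one_half_sq]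
    exact h i
  have partial_sum_le (u : Finset ι) :
      ∑ i ∈ u, t i ≤ (∑' i, f i) ^ (1 / 2 : ℝ) * (∑' i, g i) ^ (1 / 2 : ℝ) :=
    calc ∑ i ∈ u, t i ≤ ∑ i ∈ u, f i ^ (1 / 2 : ℝ) * g i ^ (1 / 2 : ℝ) :=
          Finset.sum_le_sum fun i _ => le_sqrt_mul_sqrt i
      _ ≤ (∑ i ∈ u, f i) ^ (1 / 2 : ℝ) * (∑ i ∈ u, g i) ^ (1 / 2 : ℝ) := by
          simpa only [ENNReal.rpow_two, rpow_one_half_sq] using ENNReal.inner_le_Lp_mul_Lq u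
            (fun i => f i ^ (1 / 2 : ℝ)) (fun i => g i ^ (1 / 2 : ℝ)) Real.HolderConjugate.two_two
      _ ≤ _ := by gcongr <;> exact ENNReal.sum_le_tsum u
  calc (∑' i, t i) ^ 2
      ≤ ((∑' i, f i) ^ (1 / 2 : ℝ) * (∑' i, g i) ^ (1 / 2 : ℝ)) ^ 2 := by
        gcongr
        exact ENNReal.summable.tsum_le_of_sum_le partial_sum_le
    _ = _ := by rw [mul_pow, rpow_one_half_sq, rpow_one_half_sq]

theorem tsum_mul_sq_tsum_le {κ ι : Type*} {W : κ → ℝ≥0∞} {T J f : κ → ι → ℝ≥0∞} {D : ℝ≥0∞}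
    (hT : ∀ k i, W k * T k i ^ 2 ≤ J k i * f k i) (hJ : ∀ k, ∑' i, J k i ≤ D) :
    ∑' k, W k * (∑' i, T k i) ^ 2 ≤ D * ∑' k, ∑' i, f k i := by
  rw [← ENNReal.tsum_mul_left]
  refine ENNReal.tsum_le_tsum fun k => ?_
  calc W k * (∑' i, T k i) ^ 2 = (∑' i, W k ^ (1 / 2 : ℝ) * T k i) ^ 2 := by
        rw [ENNReal.tsum_mul_left, mul_pow, rpow_one_half_sq]
    _ ≤ (∑' i, J k i) * ∑' i, f k i :=
        sq_tsum_le_tsum_mul_tsum_of_sq_le_mul fun i => by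
          rw [mul_pow, rpow_one_half_sq]
          exact hT k i
    _ ≤ D * ∑' i, f k i := by gcongr; exact hJ k

theorem tsum_prod_mul {α β : Type*} (f : α → ℝ≥0∞) (g : β → ℝ≥0∞) :
    ∑' q : α × β, f q.1 * g q.2 = (∑' x, f x) * ∑' y, g y := by
  simp_rw [ENNReal.tsum_prod', ENNReal.tsum_mul_left, ENNReal.tsum_mul_right]

variable {G : Type*} [AddCommGroup G]

theorem tsum_prod_fst_mul_add (f g : G → ℝ≥0∞) :
    ∑' q : G × G, f q.1 * g (q.1 + q.2) = (∑' x, f x) * ∑' x, g x := by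
  have translate (x : G) : ∑' y, g (x + y) = ∑' y, g y := (Equiv.addLeft x).tsum_eq g
  simp_rw [ENNReal.tsum_prod', ENNReal.tsum_mul_left, translate, ENNReal.tsum_mul_right]

theorem tsum_prod_snd_mul_add (f g : G → ℝ≥0∞) :
    ∑' q : G × G, f q.2 * g (q.1 + q.2) = (∑' x, f x) * ∑' x, g x := by
  rw [← tsum_prod_fst_mul_add, ← (Equiv.prodComm G G).tsum_eq]
  simp only [Equiv.prodComm_apply, Prod.fst_swap, Prod.snd_swap, add_comm]

theorem tsum_tsum_sub_sub_mul (f g h : G → ℝ≥0∞) :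
    ∑' k, ∑' q : G × G, f (k - q.1 - q.2) * (g q.1 * h q.2) =
      (∑' x, f x) * ((∑' x, g x) * ∑' x, h x) := by
  have translate (q : G × G) : ∑' k, f (k - q.1 - q.2) = ∑' k, f k := by
    simpa [sub_sub] using (Equiv.subRight (q.1 + q.2)).tsum_eq f
  rw [ENNReal.tsum_comm]
  simp_rw [ENNReal.tsum_mul_right, translate, ENNReal.tsum_mul_left, tsum_prod_mul]

theorem tsum_ite_add_add_eq [DecidableEq G] (k : G) (f : G × G × G → ℝ≥0∞) :
    (∑' p : G × G × G, if p.1 + p.2.1 + p.2.2 = k then f p else 0) =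
      ∑' q : G × G, f (k - q.1 - q.2, q.1, q.2) := by
  rw [ENNReal.tsum_prod', ENNReal.tsum_comm]
  refine tsum_congr fun q => ?_
  have iff_eq (l : G) : l + q.1 + q.2 = k ↔ l = k - q.1 - q.2 := by
    rw [eq_sub_iff_add_eq, eq_sub_iff_add_eq, add_right_comm]
  simp only [iff_eq]
  exact tsum_ite_eq (k - q.1 - q.2) fun l => f (l, q)

end ExtendedSums

section Bracket

/-- The Japanese bracket `⟨x⟩ = (1 + x²)^(1/2)`, the weight of the `H^s` norms. -/
noncomputable def bracket (x : ℝ) : ℝ := √(1 + x ^ 2)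

theorem bracket_sq (x : ℝ) : bracket x ^ 2 = 1 + x ^ 2 := Real.sq_sqrt (by positivity)

theorem one_le_bracket (x : ℝ) : 1 ≤ bracket x := by
  rw [bracket, Real.one_le_sqrt]
  linarith [sq_nonneg x]

theorem bracket_pos (x : ℝ) : 0 < bracket x := one_pos.trans_le (one_le_bracket x)

theorem inv_bracket_le_one (x : ℝ) : (bracket x)⁻¹ ≤ 1 := inv_le_one_of_one_le₀ (one_le_bracket x)

theorem abs_le_bracket (x : ℝ) : |x| ≤ bracket x :=
  Real.le_sqrt_of_sq_le (by rw [sq_abs]; linarith)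

theorem bracket_le_bracket {x y : ℝ} (h : |x| ≤ |y|) : bracket x ≤ bracket y :=
  Real.sqrt_le_sqrt (by linarith [sq_le_sq.2 h])

theorem bracket_add_le (x y : ℝ) : bracket (x + y) ≤ bracket x + bracket y := by
  have mul_le : x * y ≤ bracket x * bracket y :=
    calc x * y ≤ |x| * |y| := by rw [← abs_mul]; exact le_abs_self _
      _ ≤ bracket x * bracket y :=
        mul_le_mul (abs_le_bracket x) (abs_le_bracket y) (abs_nonneg y) (bracket_pos x).le
  refine Real.sqrt_le_iff.2 ⟨(add_pos (bracket_pos x) (bracket_pos y)).le, ?_⟩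
  nlinarith [bracket_sq x, bracket_sq y]

theorem bracket_sq_le_two_mul_sq {n : ℤ} (hn : n ≠ 0) : bracket n ^ 2 ≤ 2 * (n : ℝ) ^ 2 := by
  have one_le_sq : (1 : ℝ) ≤ (n : ℝ) ^ 2 := by
    exact_mod_cast Int.add_one_le_iff.2 (sq_pos_of_ne_zero hn)
  rw [bracket_sq]
  linarith

theorem summable_inv_bracket_sq : Summable fun n : ℤ => (bracket n ^ 2)⁻¹ := by
  refine (Real.summable_one_div_int_pow.2 one_lt_two).of_norm_bounded_eventually ?_
  filter_upwards [(Set.finite_singleton (0 : ℤ)).compl_mem_cofinite] with n hn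
  have n_sq_pos : (0 : ℝ) < (n : ℝ) ^ 2 := by
    have : (n : ℝ) ≠ 0 := Int.cast_ne_zero.2 hn
    positivity
  rw [Real.norm_of_nonneg (by positivity), one_div, bracket_sq]
  exact inv_anti₀ n_sq_pos (by linarith)

end Bracket

section Kernel

/-- The partial fraction `1/⟨k - x⟩ + 1/⟨x⟩`, which dominates `⟨k⟩ / (⟨k - x⟩ ⟨x⟩)`. -/
noncomputable def partialFraction (k x : ℝ) : ℝ := (bracket (k - x))⁻¹ + (bracket x)⁻¹

theorem partialFraction_pos (k x : ℝ) : 0 < partialFraction k x :=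
  add_pos (inv_pos.2 (bracket_pos _)) (inv_pos.2 (bracket_pos _))

theorem partialFraction_le_two (k x : ℝ) : partialFraction k x ≤ 2 := by
  linarith [inv_bracket_le_one (k - x), inv_bracket_le_one x, partialFraction.eq_1 k x]

theorem inv_bracket_sub_le_partialFraction (k x : ℝ) :
    (bracket (k - x))⁻¹ ≤ partialFraction k x :=
  le_add_of_nonneg_right (inv_pos.2 (bracket_pos x)).le

theorem bracket_le_partialFraction_mul (k x : ℝ) :
    bracket k ≤ partialFraction k x * (bracket (k - x) * bracket x) := by
  have hu := bracket_pos (k - x)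
  have hx := bracket_pos x
  calc bracket k = bracket (k - x + x) := by rw [sub_add_cancel]
    _ ≤ bracket (k - x) + bracket x := bracket_add_le _ _
    _ = partialFraction k x * (bracket (k - x) * bracket x) := by
        rw [partialFraction]
        field_simp
        ring

theorem bracket_le_add_add (k x y : ℝ) :
    bracket k ≤ bracket (k - x) + bracket (k - y) + bracket (x + y) :=
  calc bracket k ≤ bracket (k - x + (k - y) + (x + y)) := by
        refine bracket_le_bracket ?_
        rw [show k - x + (k - y) + (x + y) = 2 * k by ring, abs_mul, abs_two]
        linarith [abs_nonneg k]
    _ ≤ bracket (k - x) + bracket (k - y) + bracket (x + y) :=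
        (bracket_add_le _ _).trans (by gcongr; exact bracket_add_le _ _)

/-- A majorant of `⟨k⟩³ / (⟨k - x⟩² ⟨k - y⟩² ⟨x + y⟩² ⟨x⟩ ⟨y⟩)` in which every summand separates
into square-summable functions of two independent variables. -/
noncomputable def kernelMajorant (k x y : ℝ) : ℝ :=
  2 * (partialFraction k x ^ 2 * (bracket (x + y) ^ 2)⁻¹ +
      partialFraction k y ^ 2 * (bracket (x + y) ^ 2)⁻¹) +
    partialFraction k x ^ 2 * partialFraction k y ^ 2

theorem kernelMajorant_nonneg (k x y : ℝ) : 0 ≤ kernelMajorant k x y := by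
  unfold kernelMajorant
  positivity

theorem partialFraction_mul_mul_le_kernelMajorant (k x y : ℝ) :
    partialFraction k x * partialFraction k y *
        ((bracket (k - y))⁻¹ * (bracket (x + y) ^ 2)⁻¹ +
          (bracket (k - x))⁻¹ * (bracket (x + y) ^ 2)⁻¹ +
          (bracket (k - x))⁻¹ * (bracket (k - y))⁻¹ * (bracket (x + y))⁻¹) ≤
      kernelMajorant k x y := by
  have hu := bracket_pos (k - x)
  have hv := bracket_pos (k - y)
  have hw := bracket_pos (x + y)
  have hp := partialFraction_pos k x
  have hq := partialFraction_pos k y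
  have hU := inv_bracket_sub_le_partialFraction k x
  have hV := inv_bracket_sub_le_partialFraction k y
  calc _ = partialFraction k x * (partialFraction k y * (bracket (k - y))⁻¹) *
            (bracket (x + y) ^ 2)⁻¹ +
          partialFraction k y * (partialFraction k x * (bracket (k - x))⁻¹) *
            (bracket (x + y) ^ 2)⁻¹ +
          partialFraction k x * (bracket (k - x))⁻¹ *
            (partialFraction k y * (bracket (k - y))⁻¹) * (bracket (x + y))⁻¹ := by ring
    _ ≤ 2 * (partialFraction k y * partialFraction k y) * (bracket (x + y) ^ 2)⁻¹ +
          2 * (partialFraction k x * partialFraction k x) * (bracket (x + y) ^ 2)⁻¹ +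
          partialFraction k x * partialFraction k x *
            (partialFraction k y * partialFraction k y) * 1 := by
        gcongr
        · exact partialFraction_le_two k x
        · exact partialFraction_le_two k y
        · exact inv_bracket_le_one _
    _ = kernelMajorant k x y := by rw [kernelMajorant]; ring

theorem bracket_pow_three_le (k x y : ℝ) :
    bracket k ^ 3 ≤ kernelMajorant k x y *
      ((bracket (k - x) * bracket (k - y) * bracket (x + y)) ^ 2 * (bracket x * bracket y)) := by
  have hk := bracket_pos k
  have hu := bracket_pos (k - x)
  have hv := bracket_pos (k - y)
  have hw := bracket_pos (x + y)
  have hx := bracket_pos x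
  have hy := bracket_pos y
  have hp := partialFraction_pos k x
  have hq := partialFraction_pos k y
  calc bracket k ^ 3 = bracket k * bracket k * bracket k := by ring
    _ ≤ (partialFraction k x * (bracket (k - x) * bracket x)) *
          (partialFraction k y * (bracket (k - y) * bracket y)) *
          (bracket (k - x) + bracket (k - y) + bracket (x + y)) := by
        gcongr
        · exact bracket_le_partialFraction_mul k x
        · exact bracket_le_partialFraction_mul k y
        · exact bracket_le_add_add k x y
    _ = partialFraction k x * partialFraction k y *
          ((bracket (k - y))⁻¹ * (bracket (x + y) ^ 2)⁻¹ +
            (bracket (k - x))⁻¹ * (bracket (x + y) ^ 2)⁻¹ +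
            (bracket (k - x))⁻¹ * (bracket (k - y))⁻¹ * (bracket (x + y))⁻¹) *
          ((bracket (k - x) * bracket (k - y) * bracket (x + y)) ^ 2 *
            (bracket x * bracket y)) := by
        field_simp
    _ ≤ _ := by
        gcongr
        exact partialFraction_mul_mul_le_kernelMajorant k x y

theorem tsum_partialFraction_sq_le (k : ℤ) :
    ∑' x : ℤ, ENNReal.ofReal (partialFraction k x ^ 2) ≤
      4 * ∑' n : ℤ, ENNReal.ofReal ((bracket n ^ 2)⁻¹) := by
  have reflect : ∑' x : ℤ, ENNReal.ofReal ((bracket (k - x : ℤ) ^ 2)⁻¹) =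
      ∑' n : ℤ, ENNReal.ofReal ((bracket n ^ 2)⁻¹) :=
    (Equiv.subLeft k).tsum_eq fun n : ℤ => ENNReal.ofReal ((bracket n ^ 2)⁻¹)
  have sq_le (x : ℤ) : ENNReal.ofReal (partialFraction k x ^ 2) ≤
      2 * (ENNReal.ofReal ((bracket (k - x : ℤ) ^ 2)⁻¹) + ENNReal.ofReal ((bracket x ^ 2)⁻¹)) := by
    rw [← ENNReal.ofReal_add (by positivity) (by positivity),
      ← ENNReal.ofReal_ofNat 2, ← ENNReal.ofReal_mul zero_le_two]
    refine ENNReal.ofReal_le_ofReal ?_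
    simpa only [partialFraction, inv_pow, Int.cast_sub] using
      add_sq_le (a := (bracket (k - x))⁻¹) (b := (bracket x)⁻¹)
  refine (ENNReal.tsum_le_tsum sq_le).trans_eq ?_
  rw [ENNReal.tsum_mul_left, ENNReal.tsum_add, reflect]
  ring

theorem tsum_kernelMajorant_le (k : ℤ) :
    ∑' q : ℤ × ℤ, ENNReal.ofReal (kernelMajorant k q.1 q.2) ≤
      (6 * ∑' n : ℤ, ENNReal.ofReal ((bracket n ^ 2)⁻¹)) ^ 2 := by
  set P : ℤ → ℝ≥0∞ := fun x => ENNReal.ofReal (partialFraction k x ^ 2) with hP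
  set B : ℤ → ℝ≥0∞ := fun n => ENNReal.ofReal ((bracket n ^ 2)⁻¹) with hB
  have ofReal_kernelMajorant (q : ℤ × ℤ) : ENNReal.ofReal (kernelMajorant k q.1 q.2) =
      2 * (P q.1 * B (q.1 + q.2) + P q.2 * B (q.1 + q.2)) + P q.1 * P q.2 := by
    simp only [hP, hB, kernelMajorant, Int.cast_add]
    rw [ENNReal.ofReal_add (by positivity) (by positivity), ENNReal.ofReal_mul zero_le_two,
      ENNReal.ofReal_ofNat, ENNReal.ofReal_add (by positivity) (by positivity),
      ENNReal.ofReal_mul (by positivity), ENNReal.ofReal_mul (by positivity),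
      ENNReal.ofReal_mul (by positivity)]
  have hPB : ∑' x, P x ≤ 4 * ∑' n, B n := tsum_partialFraction_sq_le k
  calc ∑' q : ℤ × ℤ, ENNReal.ofReal (kernelMajorant k q.1 q.2)
      = 2 * ((∑' x, P x) * ∑' n, B n + (∑' x, P x) * ∑' n, B n) +
          (∑' x, P x) * ∑' x, P x := by
        simp_rw [ofReal_kernelMajorant]
        rw [ENNReal.tsum_add, ENNReal.tsum_mul_left, ENNReal.tsum_add, tsum_prod_fst_mul_add,
          tsum_prod_snd_mul_add, tsum_prod_mul]
    _ ≤ 2 * ((4 * ∑' n, B n) * ∑' n, B n + (4 * ∑' n, B n) * ∑' n, B n) +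
          (4 * ∑' n, B n) * (4 * ∑' n, B n) := by gcongr
    _ = 32 * (∑' n, B n) ^ 2 := by ring
    _ ≤ 36 * (∑' n, B n) ^ 2 := by gcongr; norm_num
    _ = (6 * ∑' n, B n) ^ 2 := by ring

end Kernel

section Sobolev

/-- The weight `⟨n⟩^(2s)` of the square of the `H^s` norm. -/
noncomputable def sobolevWeight (s : ℝ) (n : ℤ) : ℝ≥0∞ := ENNReal.ofReal ((1 + (n : ℝ) ^ 2) ^ s)

theorem sobolevWeight_mono {s t : ℝ} (h : s ≤ t) (n : ℤ) : sobolevWeight s n ≤ sobolevWeight t n :=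
  ENNReal.ofReal_le_ofReal
    (Real.rpow_le_rpow_of_exponent_le (by linarith [sq_nonneg (n : ℝ)]) h)

theorem sobolevWeight_one_half (n : ℤ) :
    sobolevWeight (1 / 2) n = ENNReal.ofReal (bracket n) := by
  rw [sobolevWeight, bracket, Real.sqrt_eq_rpow]

theorem sobolevWeight_le_mul_bracket {s : ℝ} (hs : 1 / 2 ≤ s) {k l : ℤ}
    (h : k.natAbs ≤ l.natAbs) :
    sobolevWeight s k ≤ sobolevWeight (s - 1 / 2) l * ENNReal.ofReal (bracket k) := by
  have sq_le : (k : ℝ) ^ 2 ≤ (l : ℝ) ^ 2 := by exact_mod_cast Int.natAbs_le_iff_sq_le.1 h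
  rw [← sobolevWeight_one_half, sobolevWeight, sobolevWeight, sobolevWeight,
    ← ENNReal.ofReal_mul (by positivity)]
  refine ENNReal.ofReal_le_ofReal ?_
  calc (1 + (k : ℝ) ^ 2) ^ s
      = (1 + (k : ℝ) ^ 2) ^ (s - 1 / 2) * (1 + (k : ℝ) ^ 2) ^ (1 / 2 : ℝ) := by
        rw [← Real.rpow_add (by positivity), sub_add_cancel]
    _ ≤ (1 + (l : ℝ) ^ 2) ^ (s - 1 / 2) * (1 + (k : ℝ) ^ 2) ^ (1 / 2 : ℝ) := by
        gcongr

theorem HsE_sq (s : ℝ) (a : ℤ → ℝ≥0∞) : HsE s a ^ 2 = ∑' k, sobolevWeight s k * a k ^ 2 :=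
  rpow_one_half_sq _

theorem HsE_le_HsE {s t : ℝ} (hst : s ≤ t) {a b : ℤ → ℝ≥0∞} (hab : a ≤ b) :
    HsE s a ≤ HsE t b := by
  rw [← ENNReal.pow_le_pow_left_iff two_ne_zero, HsE_sq, HsE_sq]
  exact ENNReal.tsum_le_tsum fun k => by
    gcongr
    exacts [sobolevWeight_mono hst k, hab k]

end Sobolev

section NonresonantSum

/-- The trilinear sum `F_k = Σ |k| a(k₁) b(k₂) c(k₃) / |φ̃|` over the nonresonant triples with
`k₁ + k₂ + k₃ = k` and `|k| ≤ |k₁|`; the triple `(k₁, k₂, k₃)` is encoded as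
`p = (p.1, p.2.1, p.2.2)`. -/
noncomputable def nonresonantSum (a b c : ℤ → ℝ≥0∞) (k : ℤ) : ℝ≥0∞ :=
  ∑' p : ℤ × ℤ × ℤ,
    if p.1 + p.2.1 + p.2.2 = k ∧
        (p.1 + p.2.1) * (p.1 + p.2.2) * (p.2.1 + p.2.2) ≠ 0 ∧ k.natAbs ≤ p.1.natAbs
    then (k.natAbs : ℝ≥0∞) * a p.1 * b p.2.1 * c p.2.2 /
      (3 * (p.1 + p.2.1) * (p.1 + p.2.2) * (p.2.1 + p.2.2)).natAbs
    else 0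

/-- The summand of `nonresonantSum` at the triple `(k - x - y, x, y)`. -/
noncomputable def nonresonantTerm (a b c : ℤ → ℝ≥0∞) (k : ℤ) (q : ℤ × ℤ) : ℝ≥0∞ :=
  if (k - q.2) * (k - q.1) * (q.1 + q.2) ≠ 0 ∧ k.natAbs ≤ (k - q.1 - q.2).natAbs
  then (k.natAbs : ℝ≥0∞) * a (k - q.1 - q.2) * b q.1 * c q.2 /
    (3 * (k - q.2) * (k - q.1) * (q.1 + q.2)).natAbs
  else 0

theorem nonresonantSum_eq_tsum_nonresonantTerm (a b c : ℤ → ℝ≥0∞) (k : ℤ) :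
    nonresonantSum a b c k = ∑' q, nonresonantTerm a b c k q := by
  have fst_add_fst (q : ℤ × ℤ) : k - q.1 - q.2 + q.1 = k - q.2 := by ring
  have fst_add_snd (q : ℤ × ℤ) : k - q.1 - q.2 + q.2 = k - q.1 := by ring
  simp only [nonresonantSum, nonresonantTerm, ite_and (_ + _ + _ = k)]
  rw [tsum_ite_add_add_eq]
  simp only [fst_add_fst, fst_add_snd]

theorem sq_mul_brackets_le_sq_phase {u v w : ℤ} (h : v * u * w ≠ 0) :
    (bracket u * bracket v * bracket w) ^ 2 ≤ ((3 * v * u * w : ℤ) : ℝ) ^ 2 := by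
  obtain ⟨⟨hv, hu⟩, hw⟩ : (v ≠ 0 ∧ u ≠ 0) ∧ w ≠ 0 := by simpa only [mul_ne_zero_iff] using h
  calc _ = bracket u ^ 2 * bracket v ^ 2 * bracket w ^ 2 := by ring
    _ ≤ 2 * (u : ℝ) ^ 2 * (2 * (v : ℝ) ^ 2) * (2 * (w : ℝ) ^ 2) := by
        gcongr
        exacts [bracket_sq_le_two_mul_sq hu, bracket_sq_le_two_mul_sq hv,
          bracket_sq_le_two_mul_sq hw]
    _ = 8 * ((v : ℝ) * u * w) ^ 2 := by ring
    _ ≤ 9 * ((v : ℝ) * u * w) ^ 2 := by gcongr; norm_num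
    _ = _ := by push_cast; ring

theorem bracket_mul_sq_div_le {k x y : ℤ} (hne : (k - y) * (k - x) * (x + y) ≠ 0) :
    bracket k * (|(k : ℝ)| / |((3 * (k - y) * (k - x) * (x + y) : ℤ) : ℝ)|) ^ 2 ≤
      kernelMajorant k x y * (bracket x * bracket y) := by
  have hk := bracket_pos k
  have hx := bracket_pos x
  have hy := bracket_pos y
  have hJ := kernelMajorant_nonneg k x y
  have brackets_le_phase := sq_mul_brackets_le_sq_phase hne
  have phase_sq_pos : 0 < ((3 * (k - y) * (k - x) * (x + y) : ℤ) : ℝ) ^ 2 :=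
    sq_pos_of_ne_zero (Int.cast_ne_zero.2 (by simpa [mul_assoc] using hne))
  rw [div_pow, sq_abs, sq_abs, mul_div_assoc', div_le_iff₀ phase_sq_pos]
  calc bracket k * (k : ℝ) ^ 2 ≤ bracket k * bracket k ^ 2 := by
        rw [bracket_sq k]
        gcongr
        linarith
    _ = bracket k ^ 3 := by ring
    _ ≤ kernelMajorant k x y *
          ((bracket (k - x : ℤ) * bracket (k - y : ℤ) * bracket (x + y : ℤ)) ^ 2 *
            (bracket x * bracket y)) := by
        push_cast
        exact bracket_pow_three_le k x y
    _ ≤ kernelMajorant k x y *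
          (((3 * (k - y) * (k - x) * (x + y) : ℤ) : ℝ) ^ 2 * (bracket x * bracket y)) := by gcongr
    _ = _ := by ring

theorem natCast_natAbs_eq_ofReal_abs (n : ℤ) : (n.natAbs : ℝ≥0∞) = ENNReal.ofReal |(n : ℝ)| := by
  rw [← ENNReal.ofReal_natCast, Nat.cast_natAbs, Int.cast_abs]

theorem sobolevWeight_mul_symbol_sq_le {s : ℝ} (hs : 1 / 2 ≤ s) {k x y : ℤ}
    (hne : (k - y) * (k - x) * (x + y) ≠ 0) (hk : k.natAbs ≤ (k - x - y).natAbs) :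
    sobolevWeight s k *
        ((k.natAbs : ℝ≥0∞) / (3 * (k - y) * (k - x) * (x + y)).natAbs) ^ 2 ≤
      ENNReal.ofReal (kernelMajorant k x y) *
        (sobolevWeight (s - 1 / 2) (k - x - y) *
          (sobolevWeight (1 / 2) x * sobolevWeight (1 / 2) y)) := by
  have phase_pos : 0 < |((3 * (k - y) * (k - x) * (x + y) : ℤ) : ℝ)| :=
    abs_pos.2 (Int.cast_ne_zero.2 (by simpa [mul_assoc] using hne))
  have half_weight_le : ENNReal.ofReal (bracket k) *
      ((k.natAbs : ℝ≥0∞) / (3 * (k - y) * (k - x) * (x + y)).natAbs) ^ 2 ≤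
      ENNReal.ofReal (kernelMajorant k x y) *
        (sobolevWeight (1 / 2) x * sobolevWeight (1 / 2) y) := by
    rw [natCast_natAbs_eq_ofReal_abs, natCast_natAbs_eq_ofReal_abs, sobolevWeight_one_half,
      sobolevWeight_one_half, ← ENNReal.ofReal_div_of_pos phase_pos,
      ← ENNReal.ofReal_pow (by positivity), ← ENNReal.ofReal_mul (bracket_pos _).le,
      ← ENNReal.ofReal_mul (bracket_pos _).le, ← ENNReal.ofReal_mul (kernelMajorant_nonneg _ _ _)]
    exact ENNReal.ofReal_le_ofReal (bracket_mul_sq_div_le hne)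
  calc _ ≤ sobolevWeight (s - 1 / 2) (k - x - y) * ENNReal.ofReal (bracket k) *
          ((k.natAbs : ℝ≥0∞) / (3 * (k - y) * (k - x) * (x + y)).natAbs) ^ 2 := by
        gcongr
        exact sobolevWeight_le_mul_bracket hs hk
    _ ≤ sobolevWeight (s - 1 / 2) (k - x - y) * (ENNReal.ofReal (kernelMajorant k x y) *
          (sobolevWeight (1 / 2) x * sobolevWeight (1 / 2) y)) := by
        rw [mul_assoc]
        gcongr
    _ = _ := by ring

theorem sobolevWeight_mul_nonresonantTerm_sq_le {s : ℝ} (hs : 1 / 2 ≤ s) (a b c : ℤ → ℝ≥0∞)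
    (k : ℤ) (q : ℤ × ℤ) :
    sobolevWeight s k * nonresonantTerm a b c k q ^ 2 ≤
      ENNReal.ofReal (kernelMajorant k q.1 q.2) *
        (sobolevWeight (s - 1 / 2) (k - q.1 - q.2) * a (k - q.1 - q.2) ^ 2 *
          (sobolevWeight (1 / 2) q.1 * b q.1 ^ 2 * (sobolevWeight (1 / 2) q.2 * c q.2 ^ 2))) := by
  obtain ⟨x, y⟩ := q
  unfold nonresonantTerm
  split_ifs with h
  · calc _ = sobolevWeight s k *
            ((k.natAbs : ℝ≥0∞) / (3 * (k - y) * (k - x) * (x + y)).natAbs) ^ 2 *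
            (a (k - x - y) * b x * c y) ^ 2 := by
          simp only [div_eq_mul_inv]
          ring
      _ ≤ _ := mul_le_mul_left (sobolevWeight_mul_symbol_sq_le hs h.1 h.2) _
      _ = _ := by ring
  · simp

end NonresonantSum

theorem HsE_nonresonantSum_le {s : ℝ} (hs : 1 / 2 ≤ s) (a b c : ℤ → ℝ≥0∞) :
    HsE s (nonresonantSum a b c) ≤ 6 * (∑' n : ℤ, ENNReal.ofReal ((bracket n ^ 2)⁻¹)) *
      HsE (s - 1 / 2) a * HsE (1 / 2) b * HsE (1 / 2) c := by
  rw [← ENNReal.pow_le_pow_left_iff two_ne_zero, HsE_sq]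
  simp_rw [nonresonantSum_eq_tsum_nonresonantTerm]
  refine (tsum_mul_sq_tsum_le (sobolevWeight_mul_nonresonantTerm_sq_le hs a b c)
    tsum_kernelMajorant_le).trans_eq ?_
  rw [tsum_tsum_sub_sub_mul (fun l => sobolevWeight (s - 1 / 2) l * a l ^ 2)
    (fun x => sobolevWeight (1 / 2) x * b x ^ 2) (fun y => sobolevWeight (1 / 2) y * c y ^ 2),
    ← HsE_sq, ← HsE_sq, ← HsE_sq]
  ring

theorem stmt8_general :
    ∃ C : ℝ, 0 < C ∧ ∀ s : ℝ, 1 / 2 ≤ s → ∀ a b c : ℤ → ℝ≥0∞,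
      HsE s (nonresonantSum a b c) ≤
        ENNReal.ofReal C * HsE (s - 1 / 2) a * HsE (1 / 2) b * HsE (1 / 2) c := by
  have inv_sq_pos (n : ℤ) : 0 < (bracket n ^ 2)⁻¹ := inv_pos.2 (pow_pos (bracket_pos n) 2)
  have constant_pos :=
    summable_inv_bracket_sq.tsum_pos (fun n => (inv_sq_pos n).le) 0 (inv_sq_pos 0)
  refine ⟨6 * ∑' n : ℤ, (bracket n ^ 2)⁻¹, by positivity, fun s hs a b c => ?_⟩
  rw [ENNReal.ofReal_mul (by norm_num), ENNReal.ofReal_ofNat,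
    ENNReal.ofReal_tsum_of_nonneg (fun n => (inv_sq_pos n).le) summable_inv_bracket_sq]
  exact HsE_nonresonantSum_le hs a b c

theorem stmt8 (s : ℝ) (hs : 1 / 2 ≤ s) :
    ∃ C : ℝ, 0 < C ∧ ∀ a b c : ℤ → NNReal,
      HsE s (fun k =>
        if k = 0 then 0 else
          ∑' p : ℤ × ℤ × ℤ,
            if p.1 + p.2.1 + p.2.2 = k ∧
               (p.1 + p.2.1) * (p.1 + p.2.2) * (p.2.1 + p.2.2) ≠ 0 ∧
               p.1.natAbs = max k.natAbs (max p.1.natAbs (max p.2.1.natAbs p.2.2.natAbs))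
            then (k.natAbs : ℝ≥0∞) * (a p.1 : ℝ≥0∞) * (b p.2.1 : ℝ≥0∞) * (c p.2.2 : ℝ≥0∞) /
                (((3 * (p.1 + p.2.1) * (p.1 + p.2.2) * (p.2.1 + p.2.2)).natAbs : ℝ≥0∞))
            else 0)
      ≤ ENNReal.ofReal C * HsE (s - 1 / 2) (fun k => (a k : ℝ≥0∞)) *
          HsE s (fun k => (b k : ℝ≥0∞)) * HsE s (fun k => (c k : ℝ≥0∞)) := by
  obtain ⟨C, hC, bound⟩ := stmt8_general
  refine ⟨C, hC, fun a b c => (HsE_le_HsE le_rfl fun k => ?_).trans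
    ((bound s hs (fun k => a k) (fun k => b k) (fun k => c k)).trans
      (by gcongr <;> exact HsE_le_HsE hs le_rfl))⟩
  dsimp only
  split_ifs
  · exact zero_le
  · refine ENNReal.tsum_le_tsum fun p => ?_
    split_ifs with is_max first_ge
    · exact le_rfl
    · exact absurd ⟨is_max.1, is_max.2.1, by omega⟩ first_ge
    · exact zero_le
    · exact le_rfl
end

section
/- For every T > 0 and every R > 0 there exists a constant C > 0 such that the following holds: for every ε ∈ (0,1] and every C^∞ function u : ℝ × ℝ → ℝ which is 2π-periodic in its second variable, satisfies the KdV–Burgers equation ∂_t u + ∂_x³ u − ε ∂_x² u = ∂_x(u²) at every point of [0,T] × ℝ, and whose initial data satisfies ∫₀^{2π} (u(0,x)² + (∂_x u(0,x))²) dx ≤ R², one has sup_{t ∈ [0,T]} (∫₀^{2π} (u(t,x)² + (∂_x u(t,x))²) dx)^{1/2} + ε^{1/2}·(∫₀ᵀ ∫₀^{2π} (∂_x² u(τ,x))² dx dτ)^{1/2} ≤ C. -/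
/-!
The mass `∫ u²` and the Hamiltonian `∫ (u_x² + (2/3) u³)` are conserved by KdV. With viscosity the
mass decays at rate `2ε ∫ u_x²`, and the Hamiltonian changes at rate `-2ε (∫ u_xx² + 2 ∫ u u_x²)`.
Over a period `L`, the bound `u² ≤ (1 + 1/L) ∫ u² + ∫ u_x²` and the interpolation inequality
`(∫ u_x²)² ≤ ∫ u² ∫ u_xx²` give `4 |∫ u u_x²| ≤ ∫ u_xx² + K ∫ u_x²`, where `K` depends only on `L`
and the initial mass. Hence the Hamiltonian plus `K / 2` times the mass plus `ε ∫₀ᵗ ∫ u_xx²` is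
nonincreasing in time. The same pointwise bound makes the Hamiltonian control `∫ u_x²` up to a
constant, so the resulting estimate depends neither on `T` nor on `ε`.
-/

open Function MeasureTheory Set

section PartialDerivatives

variable {E : Type*} [NormedAddCommGroup E] [NormedSpace ℝ E] {F : ℝ → ℝ → E}

theorem contDiff_deriv_left {m n : WithTop ℕ∞} (hF : ContDiff ℝ m (uncurry F)) (hnm : n + 1 ≤ m) :
    ContDiff ℝ n (uncurry fun t x => deriv (F · x) t) :=
  have hswap : ContDiff ℝ m (uncurry fun (p : ℝ × ℝ) τ => F τ p.2) :=
    hF.comp (contDiff_snd.prodMk (contDiff_snd.comp contDiff_fst))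
  hswap.fderiv_apply contDiff_fst contDiff_const hnm

theorem contDiff_deriv_right {m n : WithTop ℕ∞} (hF : ContDiff ℝ m (uncurry F)) (hnm : n + 1 ≤ m) :
    ContDiff ℝ n (uncurry fun t x => deriv (F t) x) :=
  have hlift : ContDiff ℝ m (uncurry fun (p : ℝ × ℝ) y => F p.1 y) :=
    hF.comp ((contDiff_fst.comp contDiff_fst).prodMk contDiff_snd)
  hlift.fderiv_apply contDiff_snd contDiff_const hnm

theorem hasDerivAt_comp_mk_left {G : ℝ × ℝ → E} (hG : Differentiable ℝ G) (t x : ℝ) :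
    HasDerivAt (fun τ => G (τ, x)) (fderiv ℝ G (t, x) (1, 0)) t :=
  have hpair : HasDerivAt (fun τ : ℝ => (τ, x)) (1, 0) t :=
    (hasDerivAt_id' t).prodMk (hasDerivAt_const t x)
  (hG (t, x)).hasFDerivAt.comp_hasDerivAt t hpair

theorem hasDerivAt_comp_mk_right {G : ℝ × ℝ → E} (hG : Differentiable ℝ G) (t x : ℝ) :
    HasDerivAt (fun y => G (t, y)) (fderiv ℝ G (t, x) (0, 1)) x :=
  have hpair : HasDerivAt (fun y : ℝ => (t, y)) (0, 1) x :=
    (hasDerivAt_const x t).prodMk (hasDerivAt_id' x)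
  (hG (t, x)).hasFDerivAt.comp_hasDerivAt x hpair

theorem deriv_deriv_comm (hF : ContDiff ℝ 2 (uncurry F)) (t x : ℝ) :
    deriv (fun τ => deriv (F τ) x) t = deriv (fun y => deriv (F · y) t) x := by
  have hdiff : Differentiable ℝ (uncurry F) := hF.differentiable two_ne_zero
  have hdiff' : Differentiable ℝ (fderiv ℝ (uncurry F)) :=
    (hF.fderiv_right (m := 1) one_add_one_eq_two.le).differentiable one_ne_zero
  have hright (τ : ℝ) : deriv (F τ) x = fderiv ℝ (uncurry F) (τ, x) (0, 1) :=
    (hasDerivAt_comp_mk_right hdiff τ x).deriv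
  have hleft (y : ℝ) : deriv (F · y) t = fderiv ℝ (uncurry F) (t, y) (1, 0) :=
    (hasDerivAt_comp_mk_left hdiff t y).deriv
  have hsymm : IsSymmSndFDerivAt ℝ (uncurry F) (t, x) :=
    hF.contDiffAt.isSymmSndFDerivAt (by rw [minSmoothness_of_isRCLikeNormedField])
  simp only [hright, hleft]
  rw [((hasDerivAt_comp_mk_left hdiff' t x).clm_apply (hasDerivAt_const t _)).deriv,
    ((hasDerivAt_comp_mk_right hdiff' t x).clm_apply (hasDerivAt_const x _)).deriv]
  simpa using hsymm (1, 0) (0, 1)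

theorem hasDerivAt_intervalIntegral_of_contDiff (hF : ContDiff ℝ 1 (uncurry F)) (a b t : ℝ) :
    HasDerivAt (fun τ => ∫ x in a..b, F τ x) (∫ x in a..b, deriv (F · x) t) t := by
  have hF' : Continuous (uncurry fun t x => deriv (F · x) t) :=
    (contDiff_deriv_left hF (n := 0) (zero_add 1).le).continuous
  obtain ⟨M, hM⟩ := (isCompact_Icc.prod isCompact_uIcc).exists_bound_of_continuousOn
    (hF'.continuousOn (s := Icc (t - 1) (t + 1) ×ˢ uIcc a b))
  refine (intervalIntegral.hasDerivAt_integral_of_dominated_loc_of_deriv_le (F := F)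
    (F' := fun τ x => deriv (F · x) τ) (bound := fun _ => M)
    (Icc_mem_nhds (sub_one_lt t) (lt_add_one t)) ?_ ?_ ?_ ?_ ?_ ?_).2
  · exact .of_forall fun τ => (hF.continuous.uncurry_left τ).aestronglyMeasurable
  · exact (hF.continuous.uncurry_left t).intervalIntegrable _ _
  · exact (hF'.uncurry_left t).aestronglyMeasurable
  · exact .of_forall fun x hx τ hτ => hM (τ, x) ⟨hτ, uIoc_subset_uIcc hx⟩
  · exact intervalIntegrable_const
  · exact .of_forall fun x _ τ _ =>
      (hasDerivAt_comp_mk_left (hF.differentiable one_ne_zero) τ x).differentiableAt.hasDerivAt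

end PartialDerivatives

section Periodic

variable {E : Type*} [NormedAddCommGroup E] [NormedSpace ℝ E] {f g : ℝ → ℝ} {L : ℝ}

theorem periodic_deriv {f : ℝ → E} (hf : Periodic f L) : Periodic (deriv f) L := fun x => by
  rw [← deriv_comp_add_const, hf.funext]

theorem integral_mul_deriv_of_periodic (hf : ContDiff ℝ 1 f) (hg : ContDiff ℝ 1 g)
    (hfL : Periodic f L) (hgL : Periodic g L) :
    ∫ x in 0..L, f x * deriv g x = -∫ x in 0..L, deriv f x * g x := by
  rw [intervalIntegral.integral_mul_deriv_eq_deriv_mul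
    (fun x _ => (hf.differentiable one_ne_zero x).hasDerivAt)
    (fun x _ => (hg.differentiable one_ne_zero x).hasDerivAt)
    (hf.continuous_deriv_one.intervalIntegrable _ _)
    (hg.continuous_deriv_one.intervalIntegrable _ _), hfL.eq, hgL.eq, sub_self, zero_sub]

theorem integral_mul_deriv_self_of_periodic (hf : ContDiff ℝ 1 f) (hfL : Periodic f L) :
    ∫ x in 0..L, f x * deriv f x = 0 := by
  have hparts := integral_mul_deriv_of_periodic hf hf hfL hfL
  simp only [mul_comm (deriv f _)] at hparts
  linarith

theorem deriv_sq (hf : Differentiable ℝ f) (x : ℝ) :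
    deriv (fun y => f y ^ 2) x = 2 * (f x * deriv f x) := by
  rw [deriv_fun_pow (hf x), Nat.cast_ofNat, pow_one]
  ring

theorem integral_sq_mul_deriv_of_periodic (hf : ContDiff ℝ 1 f) (hfL : Periodic f L) :
    ∫ x in 0..L, f x ^ 2 * deriv f x = 0 := by
  have hparts := integral_mul_deriv_of_periodic (hf.pow 2) hf (hfL.comp (· ^ 2)) hfL
  have hcube (x : ℝ) : deriv (fun y => f y ^ 2) x * f x = 2 * (f x ^ 2 * deriv f x) := by
    rw [deriv_sq (hf.differentiable one_ne_zero)]; ring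
  simp only [hcube, intervalIntegral.integral_const_mul] at hparts
  linarith

end Periodic

/-- The squared `L²` norm of `f` over one period `[0, L]`. -/
noncomputable def l2NormSq (L : ℝ) (f : ℝ → ℝ) : ℝ :=
  ∫ x in 0..L, f x ^ 2

section Estimates

variable {f g : ℝ → ℝ} {L : ℝ}

theorem l2NormSq_nonneg (hL : 0 ≤ L) (f : ℝ → ℝ) : 0 ≤ l2NormSq L f :=
  intervalIntegral.integral_nonneg hL fun _ _ => sq_nonneg _

theorem integral_sq_add_sq (hf : Continuous f) (hg : Continuous g) (L : ℝ) :
    ∫ x in 0..L, (f x ^ 2 + g x ^ 2) = l2NormSq L f + l2NormSq L g :=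
  intervalIntegral.integral_add ((hf.pow 2).intervalIntegrable _ _)
    ((hg.pow 2).intervalIntegrable _ _)

theorem sq_integral_mul_le (hL : 0 ≤ L) (hf : Continuous f) (hg : Continuous g) :
    (∫ x in 0..L, f x * g x) ^ 2 ≤ l2NormSq L f * l2NormSq L g := by
  have hexpand (s : ℝ) : l2NormSq L (fun x => s * f x + g x) =
      l2NormSq L f * (s * s) + 2 * (∫ x in 0..L, f x * g x) * s + l2NormSq L g := by
    simp only [l2NormSq]
    rw [← intervalIntegral.integral_mul_const, ← intervalIntegral.integral_const_mul,
      ← intervalIntegral.integral_mul_const, ← intervalIntegral.integral_add,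
      ← intervalIntegral.integral_add]
    · exact intervalIntegral.integral_congr fun x _ => by ring
    all_goals exact Continuous.intervalIntegrable (by fun_prop) _ _
  have hdiscrim := discrim_le_zero fun s => hexpand s ▸ l2NormSq_nonneg hL _
  rw [discrim] at hdiscrim
  linarith

theorem l2NormSq_deriv_of_periodic (hf : ContDiff ℝ 2 f) (hfL : Periodic f L) :
    l2NormSq L (deriv f) = -∫ x in 0..L, f x * deriv (deriv f) x := by
  rw [integral_mul_deriv_of_periodic (hf.of_le one_le_two) hf.deriv' hfL (periodic_deriv hfL),
    neg_neg]
  simp only [l2NormSq, sq]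

theorem sq_l2NormSq_deriv_le_of_periodic (hL : 0 ≤ L) (hf : ContDiff ℝ 2 f) (hfL : Periodic f L) :
    l2NormSq L (deriv f) ^ 2 ≤ l2NormSq L f * l2NormSq L (deriv (deriv f)) := by
  rw [l2NormSq_deriv_of_periodic hf hfL, neg_sq]
  exact sq_integral_mul_le hL hf.continuous hf.deriv'.continuous_deriv_one

theorem sq_sub_sq_le_l2NormSq_add (hf : ContDiff ℝ 1 f) {x y : ℝ} (hx : x ∈ Icc 0 L)
    (hy : y ∈ Icc 0 L) : f x ^ 2 - f y ^ 2 ≤ l2NormSq L f + l2NormSq L (deriv f) := by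
  have hL : 0 ≤ L := hx.1.trans hx.2
  have hf' : Continuous (deriv f) := hf.continuous_deriv_one
  have hdensity : Continuous fun s => f s ^ 2 + deriv f s ^ 2 := by fun_prop
  calc f x ^ 2 - f y ^ 2
      = ∫ s in y..x, 2 * (f s * deriv f s) := by
        simp only [← deriv_sq (hf.differentiable one_ne_zero)]
        exact (intervalIntegral.integral_deriv_of_contDiffOn_uIcc (hf.pow 2).contDiffOn).symm
    _ ≤ |∫ s in y..x, (f s ^ 2 + deriv f s ^ 2)| := by
        refine (Real.le_norm_self _).trans (intervalIntegral.norm_integral_le_abs_of_norm_le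
          (.of_forall fun s => ?_) (hdensity.intervalIntegrable _ _))
        rw [Real.norm_eq_abs, abs_le]
        constructor <;> nlinarith [sq_nonneg (f s + deriv f s), sq_nonneg (f s - deriv f s)]
    _ ≤ |∫ s in 0..L, (f s ^ 2 + deriv f s ^ 2)| := by
        refine intervalIntegral.abs_integral_mono_interval ?_
          (.of_forall fun s => by positivity) (hdensity.intervalIntegrable _ _)
        rw [uIoc_of_le hL]
        exact Ioc_subset_Ioc (le_min hy.1 hx.1) (max_le hy.2 hx.2)
    _ = l2NormSq L f + l2NormSq L (deriv f) := by
        rw [integral_sq_add_sq hf.continuous hf',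
          abs_of_nonneg (add_nonneg (l2NormSq_nonneg hL _) (l2NormSq_nonneg hL _))]

theorem sq_le_l2NormSq_add_l2NormSq_deriv (hL : 0 < L) (hf : ContDiff ℝ 1 f) {x : ℝ}
    (hx : x ∈ Icc 0 L) : f x ^ 2 ≤ (1 + L⁻¹) * l2NormSq L f + l2NormSq L (deriv f) := by
  have haverage : L * (f x ^ 2 - (l2NormSq L f + l2NormSq L (deriv f))) ≤ l2NormSq L f := by
    have hmono := intervalIntegral.integral_mono_on (μ := volume) hL.le intervalIntegrable_const
      ((hf.continuous.pow 2).intervalIntegrable 0 L)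
      fun y hy => sub_le_comm.1 (sq_sub_sq_le_l2NormSq_add hf hx hy)
    rwa [intervalIntegral.integral_const, sub_zero, smul_eq_mul] at hmono
  rw [← le_inv_mul_iff₀ hL] at haverage
  linarith

theorem abs_le_l2NormSq_div_add (hL : 0 < L) (hf : ContDiff ℝ 1 f) {M : ℝ} (hM : 0 < M) {x : ℝ}
    (hx : x ∈ Icc 0 L) :
    |f x| ≤ ((1 + L⁻¹) * l2NormSq L f + l2NormSq L (deriv f)) / (4 * M) + M := by
  have hamgm : |f x| ≤ f x ^ 2 / (4 * M) + M := by
    have hsquare : |f x| ^ 2 / (4 * M) + M - |f x| = (|f x| - 2 * M) ^ 2 / (4 * M) := by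
      field_simp; ring
    have : 0 ≤ (|f x| - 2 * M) ^ 2 / (4 * M) := by positivity
    rw [← sq_abs]
    linarith
  refine hamgm.trans ?_
  gcongr
  exact sq_le_l2NormSq_add_l2NormSq_deriv hL hf hx

theorem abs_integral_mul_sq_le (hL : 0 ≤ L) (hf : Continuous f) (hg : Continuous g) {m : ℝ}
    (hm : ∀ x ∈ Icc 0 L, |f x| ≤ m) : |∫ x in 0..L, f x * g x ^ 2| ≤ m * l2NormSq L g := by
  rw [l2NormSq, ← intervalIntegral.integral_const_mul]
  refine (intervalIntegral.abs_integral_le_integral_abs hL).trans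
    (intervalIntegral.integral_mono_on hL ?_ ?_ fun x hx => ?_)
  · exact Continuous.intervalIntegrable (by fun_prop) _ _
  · exact Continuous.intervalIntegrable (by fun_prop) _ _
  · rw [abs_mul, abs_sq]
    exact mul_le_mul_of_nonneg_right (hm x hx) (sq_nonneg _)

theorem abs_integral_cube_le (hL : 0 < L) (hf : ContDiff ℝ 1 f) {M : ℝ} (hM : 0 < M)
    (hfM : l2NormSq L f ≤ M) :
    |∫ x in 0..L, f x ^ 3| ≤ ((1 + L⁻¹) * M + l2NormSq L (deriv f)) / 4 + M ^ 2 := by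
  have hderiv : 0 ≤ l2NormSq L (deriv f) := l2NormSq_nonneg hL.le _
  calc |∫ x in 0..L, f x ^ 3|
      = |∫ x in 0..L, f x * f x ^ 2| := by simp only [pow_succ' _ 2]
    _ ≤ (((1 + L⁻¹) * l2NormSq L f + l2NormSq L (deriv f)) / (4 * M) + M) * l2NormSq L f :=
        abs_integral_mul_sq_le hL.le hf.continuous hf.continuous
          fun x hx => abs_le_l2NormSq_div_add hL hf hM hx
    _ ≤ (((1 + L⁻¹) * M + l2NormSq L (deriv f)) / (4 * M) + M) * M := by
        have := l2NormSq_nonneg hL.le f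
        gcongr
    _ = ((1 + L⁻¹) * M + l2NormSq L (deriv f)) / 4 + M ^ 2 := by field_simp

theorem abs_integral_mul_deriv_sq_le_of_periodic (hL : 0 < L) (hf : ContDiff ℝ 2 f)
    (hfL : Periodic f L) {M : ℝ} (hM : 0 < M) (hfM : l2NormSq L f ≤ M) :
    4 * |∫ x in 0..L, f x * deriv f x ^ 2| ≤
      l2NormSq L (deriv (deriv f)) + (1 + L⁻¹ + 4 * M) * l2NormSq L (deriv f) := by
  have hf1 : ContDiff ℝ 1 f := hf.of_le one_le_two
  have hderiv : 0 ≤ l2NormSq L (deriv f) := l2NormSq_nonneg hL.le _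
  have hinterp : l2NormSq L (deriv f) ^ 2 / M ≤ l2NormSq L (deriv (deriv f)) := by
    rw [div_le_iff₀' hM]
    exact (sq_l2NormSq_deriv_le_of_periodic hL.le hf hfL).trans
      (mul_le_mul_of_nonneg_right hfM (l2NormSq_nonneg hL.le _))
  calc 4 * |∫ x in 0..L, f x * deriv f x ^ 2|
      ≤ 4 * ((((1 + L⁻¹) * l2NormSq L f + l2NormSq L (deriv f)) / (4 * M) + M) *
          l2NormSq L (deriv f)) := by
        gcongr
        exact abs_integral_mul_sq_le hL.le hf.continuous hf1.continuous_deriv_one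
          fun x hx => abs_le_l2NormSq_div_add hL hf1 hM hx
    _ ≤ 4 * ((((1 + L⁻¹) * M + l2NormSq L (deriv f)) / (4 * M) + M) * l2NormSq L (deriv f)) := by
        gcongr
    _ = l2NormSq L (deriv f) ^ 2 / M + (1 + L⁻¹ + 4 * M) * l2NormSq L (deriv f) := by
        field_simp; ring
    _ ≤ l2NormSq L (deriv (deriv f)) + (1 + L⁻¹ + 4 * M) * l2NormSq L (deriv f) := by gcongr

end Estimates

/-- The KdV flux `f² - f''`, for which KdV is the conservation law `∂_t u = ∂_x (kdvFlux u)`. It is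
also half the variational derivative of the Hamiltonian `kdvEnergy` below. -/
noncomputable def kdvFlux (f : ℝ → ℝ) (x : ℝ) : ℝ :=
  f x ^ 2 - deriv (deriv f) x

/-- The KdV–Burgers vector field: with it the equation reads `∂_t u = kdvBurgersField ε u`. -/
noncomputable def kdvBurgersField (ε : ℝ) (f : ℝ → ℝ) (x : ℝ) : ℝ :=
  deriv (kdvFlux f) x + ε * deriv (deriv f) x

section EnergyIdentities

variable {f : ℝ → ℝ} {L ε : ℝ}

theorem contDiff_kdvFlux (hf : ContDiff ℝ 3 f) : ContDiff ℝ 1 (kdvFlux f) :=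
  ((hf.of_le (by norm_num)).pow 2).sub hf.deriv'.deriv'

theorem periodic_kdvFlux (hfL : Periodic f L) : Periodic (kdvFlux f) L :=
  (hfL.comp (· ^ 2)).sub (periodic_deriv (periodic_deriv hfL))

theorem integral_mul_deriv_kdvFlux (hf : ContDiff ℝ 3 f) (hfL : Periodic f L) :
    ∫ x in 0..L, f x * deriv (kdvFlux f) x = 0 := by
  have hf1 : ContDiff ℝ 1 f := hf.of_le (by norm_num)
  have hf' : ContDiff ℝ 1 (deriv f) := hf.deriv'.of_le one_le_two
  rw [integral_mul_deriv_of_periodic hf1 (contDiff_kdvFlux hf) hfL (periodic_kdvFlux hfL)]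
  simp only [kdvFlux, mul_sub, mul_comm (deriv f _) (f _ ^ 2)]
  rw [intervalIntegral.integral_sub, integral_sq_mul_deriv_of_periodic hf1 hfL,
    integral_mul_deriv_self_of_periodic hf' (periodic_deriv hfL), sub_zero, neg_zero]
  all_goals exact Continuous.intervalIntegrable (by fun_prop) _ _

theorem integral_mul_kdvBurgersField (hf : ContDiff ℝ 3 f) (hfL : Periodic f L) :
    ∫ x in 0..L, f x * kdvBurgersField ε f x = -ε * l2NormSq L (deriv f) := by
  have hflux' : Continuous (deriv (kdvFlux f)) := (contDiff_kdvFlux hf).continuous_deriv_one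
  have hf'' : Continuous (deriv (deriv f)) := hf.deriv'.continuous_deriv one_le_two
  simp only [kdvBurgersField, mul_add, mul_left_comm _ ε]
  rw [intervalIntegral.integral_add, integral_mul_deriv_kdvFlux hf hfL,
    intervalIntegral.integral_const_mul, l2NormSq_deriv_of_periodic (hf.of_le (by norm_num)) hfL]
  · ring
  all_goals exact Continuous.intervalIntegrable (by fun_prop) _ _

theorem integral_sq_mul_deriv_deriv_of_periodic (hf : ContDiff ℝ 2 f) (hfL : Periodic f L) :
    ∫ x in 0..L, f x ^ 2 * deriv (deriv f) x = -(2 * ∫ x in 0..L, f x * deriv f x ^ 2) := by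
  have hf1 : ContDiff ℝ 1 f := hf.of_le one_le_two
  rw [integral_mul_deriv_of_periodic (hf1.pow 2) hf.deriv' (hfL.comp (· ^ 2))
    (periodic_deriv hfL), ← intervalIntegral.integral_const_mul]
  simp only [deriv_sq (hf1.differentiable one_ne_zero)]
  ring_nf

theorem integral_kdvFlux_mul_deriv_deriv (hf : ContDiff ℝ 2 f) (hfL : Periodic f L) :
    ∫ x in 0..L, kdvFlux f x * deriv (deriv f) x =
      -(l2NormSq L (deriv (deriv f)) + 2 * ∫ x in 0..L, f x * deriv f x ^ 2) := by
  simp only [kdvFlux, sub_mul, ← sq]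
  rw [intervalIntegral.integral_sub, integral_sq_mul_deriv_deriv_of_periodic hf hfL, l2NormSq]
  · ring
  all_goals exact Continuous.intervalIntegrable (by fun_prop) _ _

theorem integral_kdvFlux_mul_kdvBurgersField (hf : ContDiff ℝ 3 f) (hfL : Periodic f L) :
    ∫ x in 0..L, kdvFlux f x * kdvBurgersField ε f x =
      -ε * (l2NormSq L (deriv (deriv f)) + 2 * ∫ x in 0..L, f x * deriv f x ^ 2) := by
  have hflux : ContDiff ℝ 1 (kdvFlux f) := contDiff_kdvFlux hf
  simp only [kdvBurgersField, mul_add, mul_left_comm _ ε]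
  rw [intervalIntegral.integral_add,
    integral_mul_deriv_self_of_periodic hflux (periodic_kdvFlux hfL),
    intervalIntegral.integral_const_mul,
    integral_kdvFlux_mul_deriv_deriv (hf.of_le (by norm_num)) hfL]
  · ring
  all_goals exact Continuous.intervalIntegrable (by fun_prop) _ _

end EnergyIdentities

/-- The Hamiltonian `∫ (f'² + (2/3) f³)` of the KdV flow with nonlinearity `∂_x (u²)`, over one
period `[0, L]`. -/
noncomputable def kdvEnergy (L : ℝ) (f : ℝ → ℝ) : ℝ :=
  l2NormSq L (deriv f) + 2 / 3 * ∫ x in 0..L, f x ^ 3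

section TimeDerivatives

variable {u : ℝ → ℝ → ℝ} {L : ℝ}

theorem hasDerivAt_l2NormSq (hu : ContDiff ℝ 1 (uncurry u)) (t : ℝ) :
    HasDerivAt (fun τ => l2NormSq L (u τ)) (2 * ∫ x in 0..L, u t x * deriv (u · x) t) t := by
  have hslice (x : ℝ) : Differentiable ℝ (u · x) := fun τ =>
    (hasDerivAt_comp_mk_left (hu.differentiable one_ne_zero) τ x).differentiableAt
  have hderiv :=
    hasDerivAt_intervalIntegral_of_contDiff (F := fun τ x => u τ x ^ 2) (hu.pow 2) 0 L t
  simp only [deriv_sq (hslice _), intervalIntegral.integral_const_mul] at hderiv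
  exact hderiv

theorem hasDerivAt_integral_cube (hu : ContDiff ℝ 1 (uncurry u)) (t : ℝ) :
    HasDerivAt (fun τ => ∫ x in 0..L, u τ x ^ 3)
      (3 * ∫ x in 0..L, u t x ^ 2 * deriv (u · x) t) t := by
  have hslice (x : ℝ) : DifferentiableAt ℝ (u · x) t :=
    (hasDerivAt_comp_mk_left (hu.differentiable one_ne_zero) t x).differentiableAt
  have hderiv :=
    hasDerivAt_intervalIntegral_of_contDiff (F := fun τ x => u τ x ^ 3) (hu.pow 3) 0 L t
  simpa [deriv_fun_pow (hslice _), mul_assoc] using hderiv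

theorem hasDerivAt_kdvEnergy (hu : ContDiff ℝ 2 (uncurry u)) (huL : ∀ t, Periodic (u t) L) (t : ℝ) :
    HasDerivAt (fun τ => kdvEnergy L (u τ))
      (2 * ∫ x in 0..L, kdvFlux (u t) x * deriv (u · x) t) t := by
  have hu1 : ContDiff ℝ 1 (uncurry u) := hu.of_le one_le_two
  have hslice : ContDiff ℝ 2 (u t) := hu.comp (contDiff_const.prodMk contDiff_id)
  have hut : ContDiff ℝ 1 fun x => deriv (u · x) t :=
    (contDiff_deriv_left hu (n := 1) one_add_one_eq_two.le).comp (contDiff_const.prodMk contDiff_id)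
  have hutL : Periodic (fun x => deriv (u · x) t) L := fun x => by simp only [huL _ x]
  have hgradient : HasDerivAt (fun τ => l2NormSq L (deriv (u τ)))
      (2 * -∫ x in 0..L, deriv (deriv (u t)) x * deriv (u · x) t) t := by
    rw [← integral_mul_deriv_of_periodic hslice.deriv' hut (periodic_deriv (huL t)) hutL]
    simpa only [deriv_deriv_comm hu] using
      hasDerivAt_l2NormSq (contDiff_deriv_right hu (n := 1) one_add_one_eq_two.le) t
  refine (hgradient.add ((hasDerivAt_integral_cube hu1 t).const_mul (2 / 3))).congr_deriv ?_
  have hu'' : Continuous (deriv (deriv (u t))) := hslice.deriv'.continuous_deriv_one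
  simp only [kdvFlux, sub_mul]
  rw [intervalIntegral.integral_sub]
  · ring
  · exact ((hslice.continuous.pow 2).mul hut.continuous).intervalIntegrable _ _
  · exact (hu''.mul hut.continuous).intervalIntegrable _ _

end TimeDerivatives

/-- `u` is a classical `L`-periodic solution on `[0, T]` of the KdV–Burgers equation
`∂_t u + ∂_x³ u - ε ∂_x² u = ∂_x (u²)`. The function is defined for all times, so that the time
derivative at the endpoints of `[0, T]` is two-sided. -/
structure IsKdVBurgersSolution (ε L T : ℝ) (u : ℝ → ℝ → ℝ) : Prop where
  contDiff : ContDiff ℝ 3 (uncurry u)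
  periodic : ∀ t, Periodic (u t) L
  equation : ∀ t ∈ Icc 0 T, ∀ x,
    deriv (u · x) t + iteratedDeriv 3 (u t) x - ε * iteratedDeriv 2 (u t) x =
      deriv (fun y => u t y ^ 2) x

theorem iteratedDeriv_two_eq_deriv_deriv {E : Type*} [NormedAddCommGroup E] [NormedSpace ℝ E]
    (f : ℝ → E) : iteratedDeriv 2 f = deriv (deriv f) := by
  rw [iteratedDeriv_succ, iteratedDeriv_one]

namespace IsKdVBurgersSolution

variable {ε L T M t : ℝ} {u : ℝ → ℝ → ℝ}

theorem contDiff_slice (hu : IsKdVBurgersSolution ε L T u) (t : ℝ) : ContDiff ℝ 3 (u t) :=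
  hu.contDiff.comp (contDiff_const.prodMk contDiff_id)

theorem continuous_l2NormSq_deriv_deriv (hu : IsKdVBurgersSolution ε L T u) :
    Continuous fun t => l2NormSq L (deriv (deriv (u t))) := by
  have hux : ContDiff ℝ 2 (uncurry fun t x => deriv (u t) x) :=
    contDiff_deriv_right hu.contDiff (by norm_num)
  have huxx : ContDiff ℝ 1 (uncurry fun t x => deriv (deriv (u t)) x) :=
    contDiff_deriv_right hux (by norm_num)
  have hsq : Continuous (uncurry fun t x => deriv (deriv (u t)) x ^ 2) := huxx.continuous.pow 2
  exact intervalIntegral.continuous_parametric_intervalIntegral_of_continuous' hsq 0 L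

theorem deriv_time_eq (hu : IsKdVBurgersSolution ε L T u) (ht : t ∈ Icc 0 T) (x : ℝ) :
    deriv (u · x) t = kdvBurgersField ε (u t) x := by
  have hslice := hu.contDiff_slice t
  have hsq : DifferentiableAt ℝ (fun y => u t y ^ 2) x :=
    (hslice.differentiable three_ne_zero x).pow 2
  have hdd : DifferentiableAt ℝ (deriv (deriv (u t))) x :=
    hslice.deriv'.deriv'.differentiable one_ne_zero x
  have heq := hu.equation t ht x
  rw [iteratedDeriv_succ, iteratedDeriv_two_eq_deriv_deriv] at heq
  have hflux : deriv (kdvFlux (u t)) x =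
      deriv (fun y => u t y ^ 2) x - deriv (deriv (deriv (u t))) x := deriv_fun_sub hsq hdd
  rw [kdvBurgersField, hflux]
  linarith

theorem hasDerivAt_l2NormSq (hu : IsKdVBurgersSolution ε L T u) (ht : t ∈ Icc 0 T) :
    HasDerivAt (fun τ => l2NormSq L (u τ)) (-(2 * ε * l2NormSq L (deriv (u t)))) t := by
  refine (_root_.hasDerivAt_l2NormSq (hu.contDiff.of_le (by norm_num)) t).congr_deriv ?_
  simp only [hu.deriv_time_eq ht]
  rw [integral_mul_kdvBurgersField (hu.contDiff_slice t) (hu.periodic t)]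
  ring

theorem hasDerivAt_kdvEnergy (hu : IsKdVBurgersSolution ε L T u) (ht : t ∈ Icc 0 T) :
    HasDerivAt (fun τ => kdvEnergy L (u τ))
      (-(2 * ε * (l2NormSq L (deriv (deriv (u t))) +
        2 * ∫ x in 0..L, u t x * deriv (u t) x ^ 2))) t := by
  have hu2 : ContDiff ℝ 2 (uncurry u) := hu.contDiff.of_le (by norm_num)
  refine (_root_.hasDerivAt_kdvEnergy hu2 hu.periodic t).congr_deriv ?_
  simp only [hu.deriv_time_eq ht]
  rw [integral_kdvFlux_mul_kdvBurgersField (hu.contDiff_slice t) (hu.periodic t)]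
  ring

theorem antitoneOn_l2NormSq (hu : IsKdVBurgersSolution ε L T u) (hL : 0 ≤ L) (hε : 0 ≤ ε) :
    AntitoneOn (fun t => l2NormSq L (u t)) (Icc 0 T) :=
  antitoneOn_of_hasDerivWithinAt_nonpos (convex_Icc 0 T)
    (fun _ ht => (hu.hasDerivAt_l2NormSq ht).continuousAt.continuousWithinAt)
    (fun _ ht => (hu.hasDerivAt_l2NormSq (interior_subset ht)).hasDerivWithinAt)
    fun t _ => by
      have := l2NormSq_nonneg hL (deriv (u t))
      exact neg_nonpos.2 (by positivity)

theorem l2NormSq_le (hu : IsKdVBurgersSolution ε L T u) (hL : 0 ≤ L) (hε : 0 ≤ ε)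
    (hinit : l2NormSq L (u 0) ≤ M) (ht : t ∈ Icc 0 T) : l2NormSq L (u t) ≤ M :=
  (hu.antitoneOn_l2NormSq hL hε ⟨le_rfl, ht.1.trans ht.2⟩ ht ht.1).trans hinit

-- The weight on the mass is chosen so that its dissipation absorbs the `∫ (∂_x u)²` term in the
-- bound for the cubic dissipation term of the Hamiltonian.
theorem antitoneOn_kdvEnergy_add (hu : IsKdVBurgersSolution ε L T u) (hL : 0 < L) (hε : 0 ≤ ε)
    (hM : 0 < M) (hinit : l2NormSq L (u 0) ≤ M) :
    AntitoneOn (fun t => kdvEnergy L (u t) + (1 + L⁻¹ + 4 * M) / 2 * l2NormSq L (u t) +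
      ε * ∫ τ in 0..t, l2NormSq L (deriv (deriv (u τ)))) (Icc 0 T) := by
  have hprimitive (t : ℝ) := hu.continuous_l2NormSq_deriv_deriv.integral_hasStrictDerivAt 0 t
  have hderiv (t : ℝ) (ht : t ∈ Icc 0 T) := ((hu.hasDerivAt_kdvEnergy ht).add
    ((hu.hasDerivAt_l2NormSq ht).const_mul ((1 + L⁻¹ + 4 * M) / 2))).add
    ((hprimitive t).hasDerivAt.const_mul ε)
  refine antitoneOn_of_hasDerivWithinAt_nonpos (convex_Icc 0 T)
    (fun t ht => (hderiv t ht).continuousAt.continuousWithinAt)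
    (fun t ht => (hderiv t (interior_subset ht)).hasDerivWithinAt) fun t ht => ?_
  have hcubic := abs_integral_mul_deriv_sq_le_of_periodic hL
    ((hu.contDiff_slice t).of_le (by norm_num)) (hu.periodic t) hM
    (hu.l2NormSq_le hL.le hε hinit (interior_subset ht))
  have hdissipation : -(4 * ∫ x in 0..L, u t x * deriv (u t) x ^ 2) ≤
      l2NormSq L (deriv (deriv (u t))) + (1 + L⁻¹ + 4 * M) * l2NormSq L (deriv (u t)) :=
    le_trans (by linarith [neg_abs_le (∫ x in 0..L, u t x * deriv (u t) x ^ 2)]) hcubic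
  linarith [mul_le_mul_of_nonneg_left hdissipation hε]

theorem l2NormSq_deriv_add_dissipation_le (hu : IsKdVBurgersSolution ε L T u) (hL : 0 < L)
    (hε : 0 ≤ ε) (hM : 0 < M) (hinit : l2NormSq L (u 0) + l2NormSq L (deriv (u 0)) ≤ M)
    (ht : t ∈ Icc 0 T) :
    5 / 6 * l2NormSq L (deriv (u t)) + ε * ∫ τ in 0..t, l2NormSq L (deriv (deriv (u τ))) ≤
      2 * (1 + L⁻¹) * M + 4 * M ^ 2 := by
  have hnonneg (f : ℝ → ℝ) : 0 ≤ l2NormSq L f := l2NormSq_nonneg hL.le f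
  have hinit₀ : l2NormSq L (u 0) ≤ M := by linarith [hnonneg (deriv (u 0))]
  have h0 : (0 : ℝ) ∈ Icc 0 T := ⟨le_rfl, ht.1.trans ht.2⟩
  have hcube (s : ℝ) (hs : s ∈ Icc 0 T) := abs_le.1 <| abs_integral_cube_le hL
    ((hu.contDiff_slice s).of_le (by norm_num)) hM (hu.l2NormSq_le hL.le hε hinit₀ hs)
  have hdecay := hu.antitoneOn_kdvEnergy_add hL hε hM hinit₀ h0 ht ht.1
  simp only [kdvEnergy, intervalIntegral.integral_same, mul_zero, add_zero] at hdecay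
  have hweight : (1 + L⁻¹ + 4 * M) / 2 * l2NormSq L (u 0) ≤ (1 + L⁻¹ + 4 * M) / 2 * M := by gcongr
  have hweight_nonneg : 0 ≤ (1 + L⁻¹ + 4 * M) / 2 * l2NormSq L (u t) :=
    mul_nonneg (by positivity) (hnonneg _)
  have hLM : 0 ≤ L⁻¹ * M := by positivity
  linarith [(hcube t ht).1, (hcube 0 h0).2, hnonneg (u 0), sq_nonneg M]

theorem sqrt_h1NormSq_add_sqrt_dissipation_le (hu : IsKdVBurgersSolution ε L T u) (hL : 0 < L)
    (hε : 0 ≤ ε) (hM : 0 < M) (hinit : l2NormSq L (u 0) + l2NormSq L (deriv (u 0)) ≤ M)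
    (ht : t ∈ Icc 0 T) :
    √(l2NormSq L (u t) + l2NormSq L (deriv (u t))) +
      √ε * √(∫ τ in 0..T, l2NormSq L (deriv (deriv (u τ)))) ≤
      √(M + 2 * (2 * (1 + L⁻¹) * M + 4 * M ^ 2)) + √(2 * (1 + L⁻¹) * M + 4 * M ^ 2) := by
  have hnonneg (f : ℝ → ℝ) : 0 ≤ l2NormSq L f := l2NormSq_nonneg hL.le f
  have hmass : l2NormSq L (u t) ≤ M :=
    hu.l2NormSq_le hL.le hε (by linarith [hnonneg (deriv (u 0))]) ht
  have hbound_t := hu.l2NormSq_deriv_add_dissipation_le hL hε hM hinit ht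
  have hbound_T := hu.l2NormSq_deriv_add_dissipation_le hL hε hM hinit ⟨ht.1.trans ht.2, le_rfl⟩
  have hdissipation : 0 ≤ ε * ∫ τ in 0..t, l2NormSq L (deriv (deriv (u τ))) :=
    mul_nonneg hε (intervalIntegral.integral_nonneg ht.1 fun _ _ => hnonneg _)
  rw [← Real.sqrt_mul hε]
  gcongr
  · linarith [hnonneg (deriv (u t))]
  · linarith [hnonneg (deriv (u T))]

end IsKdVBurgersSolution

theorem stmt17_general (L R : ℝ) (hL : 0 < L) (hR : 0 < R) :
    ∃ C : ℝ, 0 < C ∧ ∀ ε T : ℝ, 0 ≤ ε → ∀ u : ℝ → ℝ → ℝ, IsKdVBurgersSolution ε L T u →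
      (∫ x in 0..L, (u 0 x ^ 2 + deriv (u 0) x ^ 2)) ≤ R ^ 2 →
      ∀ t ∈ Icc 0 T,
        √(∫ x in 0..L, (u t x ^ 2 + deriv (u t) x ^ 2)) +
          √ε * √(∫ τ in 0..T, ∫ x in 0..L, iteratedDeriv 2 (u τ) x ^ 2) ≤ C := by
  refine ⟨√(R ^ 2 + 2 * (2 * (1 + L⁻¹) * R ^ 2 + 4 * (R ^ 2) ^ 2)) +
    √(2 * (1 + L⁻¹) * R ^ 2 + 4 * (R ^ 2) ^ 2), by positivity, ?_⟩
  intro ε T hε u hu hinit t ht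
  have hh1 (s : ℝ) : ∫ x in 0..L, (u s x ^ 2 + deriv (u s) x ^ 2) =
      l2NormSq L (u s) + l2NormSq L (deriv (u s)) :=
    integral_sq_add_sq (hu.contDiff_slice s).continuous
      ((hu.contDiff_slice s).continuous_deriv (by norm_num)) L
  simp only [hh1, iteratedDeriv_two_eq_deriv_deriv] at hinit ⊢
  exact hu.sqrt_h1NormSq_add_sqrt_dissipation_le hL hε (by positivity) hinit ht

open Real in
theorem stmt17 (T R : ℝ) (hT : 0 < T) (hR : 0 < R) :
    ∃ C : ℝ, 0 < C ∧
      ∀ ε : ℝ, ε ∈ Set.Ioc (0 : ℝ) 1 →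
        ∀ u : ℝ → ℝ → ℝ,
          ContDiff ℝ (⊤ : ℕ∞) (fun p : ℝ × ℝ => u p.1 p.2) →
          (∀ t x : ℝ, u t (x + 2 * π) = u t x) →
          (∀ t ∈ Set.Icc (0 : ℝ) T, ∀ x : ℝ,
            deriv (fun τ => u τ x) t + iteratedDeriv 3 (u t) x -
                ε * iteratedDeriv 2 (u t) x =
              deriv (fun y => (u t y) ^ 2) x) →
          (∫ x in (0 : ℝ)..(2 * π), ((u 0 x) ^ 2 + (deriv (u 0) x) ^ 2)) ≤ R ^ 2 →
          ∀ t ∈ Set.Icc (0 : ℝ) T,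
            Real.sqrt (∫ x in (0 : ℝ)..(2 * π), ((u t x) ^ 2 + (deriv (u t) x) ^ 2)) +
                Real.sqrt ε *
                  Real.sqrt (∫ τ in (0 : ℝ)..T, ∫ x in (0 : ℝ)..(2 * π),
                    (iteratedDeriv 2 (u τ) x) ^ 2) ≤ C := by
  obtain ⟨C, hC, hbound⟩ := stmt17_general (2 * π) R two_pi_pos hR
  exact ⟨C, hC, fun ε hε u hu hper heq => hbound ε T hε.1.le u
    ⟨contDiff_infty.1 hu 3, hper, heq⟩⟩
end

section
/- For every T > 0 and every R > 0 there exists a constant C > 0 such that the following holds: for every ε ∈ (0,1] and every C^∞ function u : ℝ × ℝ → ℝ which is 2π-periodic in its second variable, satisfies the modified KdV–Burgers equation ∂_t u + ∂_x³ u − ε ∂_x² u = ∂_x(u³) at every point of [0,T] × ℝ, and whose initial data satisfies ∫₀^{2π} (u(0,x)² + (∂_x u(0,x))² + (∂_x² u(0,x))²) dx ≤ R², one has sup_{t ∈ [0,T]} (∫₀^{2π} (u(t,x)² + (∂_x u(t,x))² + (∂_x² u(t,x))²) dx)^{1/2} + ε^{1/2}·(∫₀ᵀ ∫₀^{2π}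 (u(τ,x)² + (∂_x u(τ,x))² + (∂_x² u(τ,x))² + (∂_x³ u(τ,x))²) dx dτ)^{1/2} ≤ C. -/
/-!
The modified KdV equation `∂ₜu + ∂ₓ³u = ∂ₓ(u³)` is defocusing and has conserved energies that
control the `H¹` and the `H²` norm. With viscosity their densities still satisfy local balance laws,
whose only source is proportional to `ε`. At the `H¹` level the source is a genuine loss, so the
`H¹` norm, and with it the supremum of `u²`, is bounded by a constant `N` depending only on the
data. At the `H²` level the loss is at least `∫ (∂ₓ³u)² - 10 N ∫ (∂ₓ²u)²`, and the negative term is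
absorbed by the loss of `1 + 10 N` times the `H¹` energy. Integrating the balance law of the
combined energy in time bounds the two norms at once.
-/

open MeasureTheory Set intervalIntegral

local notation "∂ₓ[" k "]" => iteratedDeriv k

section PartialDerivatives

variable {F : Type*} [NormedAddCommGroup F] [NormedSpace ℝ F] {u : ℝ → ℝ → F}

lemma deriv_snd_eq_fderiv {t x : ℝ}
    (hu : DifferentiableAt ℝ (fun p : ℝ × ℝ => u p.1 p.2) (t, x)) :
    deriv (u t) x = fderiv ℝ (fun p : ℝ × ℝ => u p.1 p.2) (t, x) (0, 1) :=
  (hu.hasFDerivAt.comp_hasDerivAt x ((hasDerivAt_const x t).prodMk (hasDerivAt_id x))).deriv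

lemma deriv_fst_eq_fderiv {t x : ℝ}
    (hu : DifferentiableAt ℝ (fun p : ℝ × ℝ => u p.1 p.2) (t, x)) :
    deriv (fun s => u s x) t = fderiv ℝ (fun p : ℝ × ℝ => u p.1 p.2) (t, x) (1, 0) :=
  (hu.hasFDerivAt.comp_hasDerivAt (f := fun s => (s, x)) t
    ((hasDerivAt_id t).prodMk (hasDerivAt_const t x))).deriv

lemma contDiff_deriv_snd {n : ℕ} (hu : ContDiff ℝ (n + 1) (fun p : ℝ × ℝ => u p.1 p.2)) :
    ContDiff ℝ n (fun p : ℝ × ℝ => deriv (u p.1) p.2) := by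
  simp only [deriv_snd_eq_fderiv (hu.differentiable (by simp) _)]
  exact (hu.fderiv_right le_rfl).clm_apply contDiff_const

lemma contDiff_deriv_fst {n : ℕ} (hu : ContDiff ℝ (n + 1) (fun p : ℝ × ℝ => u p.1 p.2)) :
    ContDiff ℝ n (fun p : ℝ × ℝ => deriv (fun s => u s p.2) p.1) := by
  simp only [deriv_fst_eq_fderiv (hu.differentiable (by simp) _)]
  exact (hu.fderiv_right le_rfl).clm_apply contDiff_const

lemma continuous_deriv_fst_slice (hu : ContDiff ℝ 1 (fun p : ℝ × ℝ => u p.1 p.2)) (t : ℝ) :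
    Continuous fun x => deriv (fun s => u s x) t :=
  (contDiff_deriv_fst (n := 0) (by simpa using hu)).continuous.comp
    (by fun_prop : Continuous fun x : ℝ => (t, x))

lemma contDiff_iteratedDeriv_snd {n : ℕ} (k : ℕ)
    (hu : ContDiff ℝ (n + k : ℕ) (fun p : ℝ × ℝ => u p.1 p.2)) :
    ContDiff ℝ n (fun p : ℝ × ℝ => ∂ₓ[k] (u p.1) p.2) := by
  induction k generalizing n with
  | zero => simpa only [iteratedDeriv_zero, add_zero] using hu
  | succ k ih =>
    simp only [iteratedDeriv_succ]
    refine contDiff_deriv_snd (u := fun t => ∂ₓ[k] (u t)) (ih (n := n + 1) ?_)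
    rwa [add_right_comm]

lemma deriv_fst_deriv_snd_comm (hu : ContDiff ℝ 2 (fun p : ℝ × ℝ => u p.1 p.2)) (t x : ℝ) :
    deriv (fun s => deriv (u s) x) t = deriv (fun y => deriv (fun s => u s y) t) x := by
  have hu1 : Differentiable ℝ (fun p : ℝ × ℝ => u p.1 p.2) := hu.differentiable (by simp)
  have hu2 : DifferentiableAt ℝ (fderiv ℝ (fun p : ℝ × ℝ => u p.1 p.2)) (t, x) :=
    (hu.fderiv_right (m := 1) (by norm_num)).differentiable (by simp) _
  have fderiv_apply (v w : ℝ × ℝ) :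
      fderiv ℝ (fun p => fderiv ℝ (fun p : ℝ × ℝ => u p.1 p.2) p v) (t, x) w =
        fderiv ℝ (fderiv ℝ (fun p : ℝ × ℝ => u p.1 p.2)) (t, x) w v := by
    simp [fderiv_clm_apply hu2 (differentiableAt_const v)]
  simp only [deriv_snd_eq_fderiv (hu1 _), deriv_fst_eq_fderiv (hu1 _)]
  rw [deriv_fst_eq_fderiv (u := fun s y => fderiv ℝ (fun p : ℝ × ℝ => u p.1 p.2) (s, y) (0, 1))
      (hu2.clm_apply (differentiableAt_const _)),
    deriv_snd_eq_fderiv (u := fun s y => fderiv ℝ (fun p : ℝ × ℝ => u p.1 p.2) (s, y) (1, 0))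
      (hu2.clm_apply (differentiableAt_const _)), fderiv_apply, fderiv_apply]
  exact hu.contDiffAt.isSymmSndFDerivAt (by simp) _ _

lemma deriv_fst_iteratedDeriv_snd_comm {k : ℕ}
    (hu : ContDiff ℝ (k + 1 : ℕ) (fun p : ℝ × ℝ => u p.1 p.2)) (t x : ℝ) :
    deriv (fun s => ∂ₓ[k] (u s) x) t = ∂ₓ[k] (fun y => deriv (fun s => u s y) t) x := by
  induction k generalizing x with
  | zero => simp only [iteratedDeriv_zero]
  | succ k ih =>
    have hk : ContDiff ℝ 2 (fun p : ℝ × ℝ => ∂ₓ[k] (u p.1) p.2) :=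
      contDiff_iteratedDeriv_snd (n := 2) k (hu.of_le (by exact_mod_cast (by lia)))
    simp only [iteratedDeriv_succ]
    rw [deriv_fst_deriv_snd_comm (u := fun s => ∂ₓ[k] (u s)) hk,
      funext (ih (hu.of_le (by exact_mod_cast Nat.le_succ _)))]

lemma periodic_iteratedDeriv {f : ℝ → F} {ℓ : ℝ} (hf : Function.Periodic f ℓ) (k : ℕ) :
    Function.Periodic (∂ₓ[k] f) ℓ := by
  intro x
  rw [← congrFun (iteratedDeriv_comp_add_const k f ℓ) x, funext hf]

end PartialDerivatives

section ParametricIntegral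

variable {F : Type*} [NormedAddCommGroup F] [NormedSpace ℝ F] {a b : ℝ} {f : ℝ → ℝ → F}

lemma hasDerivAt_integral_of_contDiff (hf : ContDiff ℝ 1 (fun p : ℝ × ℝ => f p.1 p.2)) (t : ℝ) :
    HasDerivAt (fun s => ∫ x in a..b, f s x) (∫ x in a..b, deriv (fun s => f s x) t) t := by
  have hf' : Continuous (fun p : ℝ × ℝ => deriv (fun s => f s p.2) p.1) :=
    (contDiff_deriv_fst (n := 0) (by simpa using hf)).continuous
  obtain ⟨M, hM⟩ := ((isCompact_Icc (a := t - 1) (b := t + 1)).prod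
    (isCompact_uIcc (a := a) (b := b))).exists_bound_of_continuousOn hf'.continuousOn
  have hf0 : Continuous (fun p : ℝ × ℝ => f p.1 p.2) := hf.continuous
  refine (intervalIntegral.hasDerivAt_integral_of_dominated_loc_of_deriv_le (bound := fun _ => M)
    (F' := fun s x => deriv (fun s => f s x) s)
    (Icc_mem_nhds (by linarith : t - 1 < t) (by linarith : t < t + 1)) ?_ ?_ ?_ ?_ (by simp) ?_).2
  · exact .of_forall fun s => Continuous.aestronglyMeasurable (by fun_prop)
  · exact Continuous.intervalIntegrable (by fun_prop) _ _
  · exact (continuous_deriv_fst_slice hf t).aestronglyMeasurable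
  · exact .of_forall fun x hx s hs => hM (s, x) ⟨hs, uIoc_subset_uIcc hx⟩
  · refine .of_forall fun x _ s _ => DifferentiableAt.hasDerivAt ?_
    exact (by fun_prop : ContDiff ℝ 1 fun s => f s x).differentiable (by simp) s

lemma hasDerivAt_integral_of_balance_law [CompleteSpace F] {flux f' D : ℝ → F} {t : ℝ}
    (hf : ContDiff ℝ 1 (fun p : ℝ × ℝ => f p.1 p.2)) (hD : Continuous D)
    (hf' : ∀ x, HasDerivAt (fun s => f s x) (f' x) t)
    (hflux : ∀ x, HasDerivAt flux (f' x + D x) x) (hper : flux b = flux a) :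
    HasDerivAt (fun s => ∫ x in a..b, f s x) (-∫ x in a..b, D x) t := by
  have hderiv := hasDerivAt_integral_of_contDiff (a := a) (b := b) hf t
  simp only [fun x => (hf' x).deriv] at hderiv
  have hf'c : Continuous f' := by
    simpa only [fun x => (hf' x).deriv] using continuous_deriv_fst_slice hf t
  have hflux_integral : (∫ x in a..b, f' x) + ∫ x in a..b, D x = 0 := by
    rw [← integral_add (hf'c.intervalIntegrable _ _) (hD.intervalIntegrable _ _),
      integral_eq_sub_of_hasDerivAt (fun x _ => hflux x)
        ((hf'c.add hD).intervalIntegrable _ _), hper, sub_self]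
  rwa [eq_neg_of_add_eq_zero_left hflux_integral] at hderiv

end ParametricIntegral

section Sobolev

variable {ℓ : ℝ} {v : ℝ → ℝ}

/-- The square of the `Hᵏ` norm over one period `[0, ℓ]` of a function `v` of period `ℓ`. -/
noncomputable def sobolevNormSq (ℓ : ℝ) (k : ℕ) (v : ℝ → ℝ) : ℝ :=
  ∫ x in (0 : ℝ)..ℓ, ∑ i ∈ Finset.range (k + 1), ∂ₓ[i] v x ^ 2

lemma continuous_sum_sq_iteratedDeriv {k : ℕ} (hv : ContDiff ℝ k v) :
    Continuous fun x => ∑ i ∈ Finset.range (k + 1), ∂ₓ[i] v x ^ 2 :=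
  continuous_finsetSum _ fun i hi => (hv.continuous_iteratedDeriv i
    (by exact_mod_cast Finset.mem_range_succ_iff.1 hi)).pow 2

lemma sobolevNormSq_nonneg (hℓ : 0 ≤ ℓ) (k : ℕ) : 0 ≤ sobolevNormSq ℓ k v :=
  integral_nonneg hℓ fun _ _ => Finset.sum_nonneg fun _ _ => sq_nonneg _

lemma sobolevNormSq_mono (hℓ : 0 ≤ ℓ) {j k : ℕ} (hjk : j ≤ k) (hv : ContDiff ℝ k v) :
    sobolevNormSq ℓ j v ≤ sobolevNormSq ℓ k v := by
  refine integral_mono hℓ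
    ((continuous_sum_sq_iteratedDeriv (hv.of_le (mod_cast hjk))).intervalIntegrable _ _)
    ((continuous_sum_sq_iteratedDeriv hv).intervalIntegrable _ _) fun x => ?_
  exact Finset.sum_le_sum_of_subset_of_nonneg (by gcongr) fun _ _ _ => sq_nonneg _

lemma continuous_sobolevNormSq {u : ℝ → ℝ → ℝ} {k : ℕ}
    (hu : ContDiff ℝ k (fun p : ℝ × ℝ => u p.1 p.2)) :
    Continuous fun t => sobolevNormSq ℓ k (u t) := by
  refine continuous_parametric_intervalIntegral_of_continuous'
    (f := fun t x => ∑ i ∈ Finset.range (k + 1), ∂ₓ[i] (u t) x ^ 2)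
    (continuous_finsetSum _ fun i hi => ?_) _ _
  have hik : 0 + i ≤ k := by simpa using Finset.mem_range_succ_iff.1 hi
  exact (contDiff_iteratedDeriv_snd i (hu.of_le (mod_cast hik))).continuous.pow 2

lemma sq_right_le_integral_sq_add_sq_deriv {a b : ℝ} (hab : a < b) (hv : ContDiff ℝ 1 v) :
    v b ^ 2 ≤ ((b - a)⁻¹ + 1) * ∫ x in a..b, (v x ^ 2 + deriv v x ^ 2) := by
  have hc : Continuous v := hv.continuous
  have hint (a b : ℝ) : IntervalIntegrable (fun x => v x ^ 2 + deriv v x ^ 2) volume a b :=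
    Continuous.intervalIntegrable (by fun_prop) _ _
  obtain ⟨y, hy, hy_avg⟩ := exists_eq_interval_average (f := fun x => v x ^ 2) hab.ne
    (by fun_prop : Continuous fun x => v x ^ 2).continuousOn
  rw [uIoo_of_le hab.le] at hy
  have hvy : v y ^ 2 ≤ (b - a)⁻¹ * ∫ x in a..b, (v x ^ 2 + deriv v x ^ 2) := by
    rw [hy_avg, interval_average_eq, smul_eq_mul]
    refine mul_le_mul_of_nonneg_left (integral_mono hab.le
      (Continuous.intervalIntegrable (by fun_prop) _ _) (hint a b) fun x => ?_)
      (inv_nonneg.2 (sub_nonneg.2 hab.le))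
    exact le_add_of_nonneg_right (sq_nonneg _)
  have hincrement : v b ^ 2 - v y ^ 2 ≤ ∫ x in a..b, (v x ^ 2 + deriv v x ^ 2) :=
    calc v b ^ 2 - v y ^ 2 = ∫ x in y..b, 2 * v x * deriv v x :=
          (integral_eq_sub_of_hasDerivAt (f := fun x => v x ^ 2)
            (fun x _ => by simpa using (hv.differentiable (by simp) x).hasDerivAt.fun_pow 2)
            (Continuous.intervalIntegrable (by fun_prop) _ _)).symm
      _ ≤ ∫ x in y..b, (v x ^ 2 + deriv v x ^ 2) :=
          integral_mono hy.2.le (Continuous.intervalIntegrable (by fun_prop) _ _) (hint y b)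
            fun x => two_mul_le_add_sq _ _
      _ ≤ ∫ x in a..b, (v x ^ 2 + deriv v x ^ 2) :=
          integral_mono_interval hy.1.le hy.2.le le_rfl
            (.of_forall fun x => by positivity) (hint a b)
  linarith

lemma sq_le_sobolevNormSq_one (hℓ : 0 < ℓ) (hv : ContDiff ℝ 1 v) (hper : Function.Periodic v ℓ)
    (x : ℝ) : v x ^ 2 ≤ (ℓ⁻¹ + 1) * sobolevNormSq ℓ 1 v := by
  have hper' : Function.Periodic (fun x => v x ^ 2 + deriv v x ^ 2) ℓ := fun x => by
    have := periodic_iteratedDeriv hper 1 x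
    simp only [iteratedDeriv_one] at this
    simp only [hper x, this]
  have h := sq_right_le_integral_sq_add_sq_deriv (sub_lt_self x hℓ) hv
  have hshift := hper'.intervalIntegral_add_eq (x - ℓ) 0
  rw [sub_add_cancel, zero_add] at hshift
  simpa [sobolevNormSq, Finset.sum_range_succ, hshift] using h

end Sobolev

section Energies

variable {ℓ : ℝ} {v : ℝ → ℝ}

/-- Half the squared `L²` norm plus the Hamiltonian of the modified Korteweg–de Vries equation
`∂ₜv + ∂ₓ³v = ∂ₓ(v³)`, both of which that equation conserves. It controls the `H¹` norm. -/
noncomputable def h1Energy (ℓ : ℝ) (v : ℝ → ℝ) : ℝ :=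
  ∫ x in (0 : ℝ)..ℓ, (v x ^ 2 / 2 + ∂ₓ[1] v x ^ 2 / 2 + v x ^ 4 / 4)

/-- The next conserved quantity of the modified Korteweg–de Vries equation, which together with
`h1Energy` controls the `H²` norm. -/
noncomputable def h2Energy (ℓ : ℝ) (v : ℝ → ℝ) : ℝ :=
  ∫ x in (0 : ℝ)..ℓ, (∂ₓ[2] v x ^ 2 / 2 + 5 / 2 * (v x ^ 2 * ∂ₓ[1] v x ^ 2) + v x ^ 6 / 4)

/-- The rate, per unit of viscosity, at which the flow decreases `h1Energy`. -/
noncomputable def h1Dissipation (ℓ : ℝ) (v : ℝ → ℝ) : ℝ :=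
  ∫ x in (0 : ℝ)..ℓ, (∂ₓ[1] v x ^ 2 + ∂ₓ[2] v x ^ 2 + 3 * v x ^ 2 * ∂ₓ[1] v x ^ 2)

/-- The rate, per unit of viscosity, at which the flow decreases `h2Energy`. -/
noncomputable def h2Dissipation (ℓ : ℝ) (v : ℝ → ℝ) : ℝ :=
  ∫ x in (0 : ℝ)..ℓ, (∂ₓ[3] v x ^ 2 + 5 * v x ^ 2 * ∂ₓ[2] v x ^ 2
    + 10 * v x * ∂ₓ[1] v x ^ 2 * ∂ₓ[2] v x + 5 / 3 * ∂ₓ[1] v x ^ 4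
    + 15 / 2 * v x ^ 4 * ∂ₓ[1] v x ^ 2)

lemma integral_le_mul_integral {a b c : ℝ} {f g : ℝ → ℝ} (hab : a ≤ b) (hf : Continuous f)
    (hg : Continuous g) (hfg : ∀ x, f x ≤ c * g x) :
    ∫ x in a..b, f x ≤ c * ∫ x in a..b, g x := by
  rw [← intervalIntegral.integral_const_mul]
  exact integral_mono hab (hf.intervalIntegrable _ _)
    ((hg.const_mul c).intervalIntegrable _ _) hfg

lemma sobolevNormSq_one_le_h1Energy (hℓ : 0 ≤ ℓ) (hv : ContDiff ℝ 1 v) :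
    sobolevNormSq ℓ 1 v ≤ 2 * h1Energy ℓ v := by
  have hv0 := hv.continuous
  refine integral_le_mul_integral hℓ (continuous_sum_sq_iteratedDeriv hv) (by fun_prop) fun x => ?_
  simp only [Finset.sum_range_succ, Finset.sum_range_zero, iteratedDeriv_zero]
  have : 0 ≤ v x ^ 4 := by positivity
  linarith

lemma h1Energy_nonneg (hℓ : 0 ≤ ℓ) : 0 ≤ h1Energy ℓ v :=
  integral_nonneg hℓ fun x _ => by positivity

lemma h1Dissipation_nonneg (hℓ : 0 ≤ ℓ) : 0 ≤ h1Dissipation ℓ v :=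
  integral_nonneg hℓ fun x _ => by positivity

lemma sobolevNormSq_two_le_h2Energy_add_h1Energy (hℓ : 0 ≤ ℓ) (hv : ContDiff ℝ 2 v) :
    sobolevNormSq ℓ 2 v ≤ 2 * (h2Energy ℓ v + h1Energy ℓ v) := by
  have hv0 := hv.continuous
  have hv1 := hv.continuous_iteratedDeriv 1 (by norm_num)
  rw [h2Energy, h1Energy, ← integral_add (Continuous.intervalIntegrable (by fun_prop) _ _)
    (Continuous.intervalIntegrable (by fun_prop) _ _)]
  refine integral_le_mul_integral hℓ (continuous_sum_sq_iteratedDeriv hv) (by fun_prop) fun x => ?_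
  simp only [Finset.sum_range_succ, Finset.sum_range_zero, iteratedDeriv_zero]
  have : 0 ≤ 5 * (v x ^ 2 * ∂ₓ[1] v x ^ 2) + v x ^ 6 / 2 + v x ^ 4 / 2 := by positivity
  linarith

lemma h1Energy_le_of_sq_le {B : ℝ} (hℓ : 0 ≤ ℓ) (hv : ContDiff ℝ 1 v) (hB : ∀ x, v x ^ 2 ≤ B) :
    h1Energy ℓ v ≤ (1 / 2 + B / 4) * sobolevNormSq ℓ 1 v := by
  have hv0 := hv.continuous
  refine integral_le_mul_integral hℓ (by fun_prop) (continuous_sum_sq_iteratedDeriv hv) fun x => ?_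
  simp only [Finset.sum_range_succ, Finset.sum_range_zero, iteratedDeriv_zero, zero_add]
  have hB0 : 0 ≤ B := (sq_nonneg _).trans (hB x)
  calc v x ^ 2 / 2 + ∂ₓ[1] v x ^ 2 / 2 + v x ^ 4 / 4
      = (1 / 2 + v x ^ 2 / 4) * v x ^ 2 + 1 / 2 * ∂ₓ[1] v x ^ 2 := by ring
    _ ≤ (1 / 2 + B / 4) * v x ^ 2 + (1 / 2 + B / 4) * ∂ₓ[1] v x ^ 2 := by
        gcongr
        · exact hB x
        · linarith
    _ = (1 / 2 + B / 4) * (v x ^ 2 + ∂ₓ[1] v x ^ 2) := by ring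

lemma h2Energy_le_of_sq_le {B : ℝ} (hℓ : 0 ≤ ℓ) (hv : ContDiff ℝ 2 v) (hB : ∀ x, v x ^ 2 ≤ B) :
    h2Energy ℓ v ≤ (1 / 2 + 5 / 2 * B + B ^ 2 / 4) * sobolevNormSq ℓ 2 v := by
  have hv0 := hv.continuous
  have hv1 := hv.continuous_iteratedDeriv 1 (by norm_num)
  refine integral_le_mul_integral hℓ (by fun_prop) (continuous_sum_sq_iteratedDeriv hv) fun x => ?_
  simp only [Finset.sum_range_succ, Finset.sum_range_zero, iteratedDeriv_zero, zero_add]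
  have hB0 : 0 ≤ B := (sq_nonneg _).trans (hB x)
  have hB2 : 0 ≤ B ^ 2 := sq_nonneg B
  calc ∂ₓ[2] v x ^ 2 / 2 + 5 / 2 * (v x ^ 2 * ∂ₓ[1] v x ^ 2) + v x ^ 6 / 4
      = (v x ^ 2) ^ 2 / 4 * v x ^ 2 + 5 / 2 * v x ^ 2 * ∂ₓ[1] v x ^ 2
          + 1 / 2 * ∂ₓ[2] v x ^ 2 := by ring
    _ ≤ (1 / 2 + 5 / 2 * B + B ^ 2 / 4) * v x ^ 2
          + (1 / 2 + 5 / 2 * B + B ^ 2 / 4) * ∂ₓ[1] v x ^ 2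
          + (1 / 2 + 5 / 2 * B + B ^ 2 / 4) * ∂ₓ[2] v x ^ 2 := by
        have hBx : (v x ^ 2) ^ 2 ≤ B ^ 2 := by gcongr; exact hB x
        gcongr ?_ * _ + ?_ * _ + ?_ * _ <;> linarith [hB x]
    _ = (1 / 2 + 5 / 2 * B + B ^ 2 / 4) * (v x ^ 2 + ∂ₓ[1] v x ^ 2 + ∂ₓ[2] v x ^ 2) := by ring

lemma exists_energy_bound (hℓ : 0 < ℓ) (M : ℝ) :
    ∃ Q, ∀ v : ℝ → ℝ, ContDiff ℝ 2 v → Function.Periodic v ℓ → sobolevNormSq ℓ 2 v ≤ M →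
      h1Energy ℓ v ≤ Q ∧ h2Energy ℓ v ≤ Q := by
  set B := (ℓ⁻¹ + 1) * M
  refine ⟨max ((1 / 2 + B / 4) * M) ((1 / 2 + 5 / 2 * B + B ^ 2 / 4) * M),
    fun v hv hper hM => ?_⟩
  have hv1 : ContDiff ℝ 1 v := hv.of_le (by norm_num)
  have hM1 : sobolevNormSq ℓ 1 v ≤ M := (sobolevNormSq_mono hℓ.le one_le_two hv).trans hM
  have hB (x : ℝ) : v x ^ 2 ≤ B := (sq_le_sobolevNormSq_one hℓ hv1 hper x).trans
    (mul_le_mul_of_nonneg_left hM1 (by positivity))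
  have hB0 : 0 ≤ B := (sq_nonneg _).trans (hB 0)
  constructor
  · exact le_max_of_le_left ((h1Energy_le_of_sq_le hℓ.le hv1 hB).trans (by gcongr))
  · exact le_max_of_le_right ((h2Energy_le_of_sq_le hℓ.le hv hB).trans (by gcongr))

/-- The only indefinite term of `h2Dissipation` is absorbed by completing the square
`5 / 3 * ((∂ₓv)² + 3 v ∂ₓ²v)²`, which leaves `-10 v² (∂ₓ²v)²` for `h1Dissipation` to compensate. -/
lemma sobolevNormSq_three_sub_le_dissipation {N : ℝ} (hℓ : 0 ≤ ℓ) (hv : ContDiff ℝ 3 v)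
    (hN : ∀ x, v x ^ 2 ≤ N) :
    sobolevNormSq ℓ 3 v - sobolevNormSq ℓ 0 v ≤
      h2Dissipation ℓ v + (1 + 10 * N) * h1Dissipation ℓ v := by
  have hv0 := hv.continuous
  have hv1 := hv.continuous_iteratedDeriv 1 (by norm_num)
  have hv2 := hv.continuous_iteratedDeriv 2 (by norm_num)
  have hint {f : ℝ → ℝ} (hf : Continuous f) : IntervalIntegrable f volume 0 ℓ :=
    hf.intervalIntegrable _ _
  have h0 := continuous_sum_sq_iteratedDeriv (k := 0) (hv.of_le (by norm_num))
  have h3 := continuous_sum_sq_iteratedDeriv (k := 3) hv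
  rw [h2Dissipation, h1Dissipation, sobolevNormSq, sobolevNormSq,
    ← intervalIntegral.integral_const_mul,
    ← integral_sub (hint h3) (hint h0), ← integral_add (hint (by fun_prop)) (hint (by fun_prop))]
  refine integral_mono hℓ (hint (h3.sub h0)) (hint (by fun_prop)) fun x => ?_
  simp only [Finset.sum_range_succ, Finset.sum_range_zero, iteratedDeriv_zero, zero_add]
  have hN0 : 0 ≤ N := (sq_nonneg _).trans (hN x)
  have hsquare : 0 ≤ 5 / 3 * (∂ₓ[1] v x ^ 2 + 3 * (v x * ∂ₓ[2] v x)) ^ 2 := by positivity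
  have hNx : v x ^ 2 * ∂ₓ[2] v x ^ 2 ≤ N * ∂ₓ[2] v x ^ 2 := by gcongr; exact hN x
  have hrest : 0 ≤ 15 / 2 * v x ^ 4 * ∂ₓ[1] v x ^ 2 + 10 * N * ∂ₓ[1] v x ^ 2
      + (1 + 10 * N) * (3 * v x ^ 2 * ∂ₓ[1] v x ^ 2) := by positivity
  linarith

end Energies

section VectorField

variable {ε : ℝ} {v : ℝ → ℝ}

/-- The vector field of the modified KdV–Burgers flow: the equation reads `∂ₜu = field(u)`, with
`∂ₓ(u³)` expanded. -/
noncomputable def mkdvBurgersField (ε : ℝ) (v : ℝ → ℝ) (x : ℝ) : ℝ :=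
  -∂ₓ[3] v x + ε * ∂ₓ[2] v x + 3 * v x ^ 2 * ∂ₓ[1] v x

/-- The flux in the local balance law for the density of `h1Energy`. -/
noncomputable def h1Flux (ε : ℝ) (v : ℝ → ℝ) (x : ℝ) : ℝ :=
  -(v x * ∂ₓ[2] v x) + ∂ₓ[1] v x ^ 2 / 2 + 3 / 4 * v x ^ 4
    + -(∂ₓ[1] v x * ∂ₓ[3] v x) + ∂ₓ[2] v x ^ 2 / 2 + 3 * (v x ^ 2 * ∂ₓ[1] v x ^ 2)
    + -(v x ^ 3 * ∂ₓ[2] v x) + v x ^ 6 / 2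
    + ε * (v x * ∂ₓ[1] v x + ∂ₓ[1] v x * ∂ₓ[2] v x + v x ^ 3 * ∂ₓ[1] v x)

/-- The flux in the local balance law for the density of `h2Energy`. The coefficient of
`ε v (∂ₓv)³` is free: it trades `v (∂ₓv)² ∂ₓ²v` against `(∂ₓv)⁴` in `h2Dissipation`, and `5 / 3`
makes the square in `sobolevNormSq_three_sub_le_dissipation` available. -/
noncomputable def h2Flux (ε : ℝ) (v : ℝ → ℝ) (x : ℝ) : ℝ :=
  -(∂ₓ[2] v x * ∂ₓ[4] v x) + ∂ₓ[3] v x ^ 2 / 2 + 1 / 4 * ∂ₓ[1] v x ^ 4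
    + 4 * (v x ^ 2 * ∂ₓ[2] v x ^ 2) + -5 * (v x ^ 2 * ∂ₓ[1] v x * ∂ₓ[3] v x)
    + 5 * (v x * ∂ₓ[1] v x ^ 2 * ∂ₓ[2] v x) + -(3 / 2) * (v x ^ 5 * ∂ₓ[2] v x)
    + 45 / 4 * (v x ^ 4 * ∂ₓ[1] v x ^ 2) + 9 / 16 * v x ^ 8
    + ε * (∂ₓ[2] v x * ∂ₓ[3] v x + 5 * (v x ^ 2 * ∂ₓ[1] v x * ∂ₓ[2] v x)
      + 3 / 2 * (v x ^ 5 * ∂ₓ[1] v x) + 5 / 3 * (v x * ∂ₓ[1] v x ^ 3))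

lemma hasDerivAt_iteratedDeriv {n : ℕ} (hv : ContDiff ℝ n v) {k : ℕ} (hk : k < n) (x : ℝ) :
    HasDerivAt (∂ₓ[k] v) (∂ₓ[k + 1] v x) x := by
  rw [iteratedDeriv_succ]
  exact (hv.differentiable_iteratedDeriv k (mod_cast hk) x).hasDerivAt

lemma iteratedDeriv_one_mkdvBurgersField (hv : ContDiff ℝ 4 v) (x : ℝ) :
    ∂ₓ[1] (mkdvBurgersField ε v) x = -∂ₓ[4] v x + ε * ∂ₓ[3] v x
      + 6 * v x * ∂ₓ[1] v x ^ 2 + 3 * v x ^ 2 * ∂ₓ[2] v x := by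
  have d0 := hasDerivAt_iteratedDeriv (n := 4) (k := 0) hv (by norm_num) x
  have d1 := hasDerivAt_iteratedDeriv (n := 4) (k := 1) hv (by norm_num) x
  have d2 := hasDerivAt_iteratedDeriv (n := 4) (k := 2) hv (by norm_num) x
  have d3 := hasDerivAt_iteratedDeriv (n := 4) (k := 3) hv (by norm_num) x
  rw [iteratedDeriv_zero] at d0
  rw [iteratedDeriv_one]
  refine (((d3.fun_neg.fun_add (d2.const_mul ε)).fun_add
    (((d0.fun_pow 2).const_mul 3).fun_mul d1)).congr_deriv ?_).deriv
  push_cast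
  ring

lemma iteratedDeriv_two_mkdvBurgersField (hv : ContDiff ℝ 5 v) (x : ℝ) :
    ∂ₓ[2] (mkdvBurgersField ε v) x = -∂ₓ[5] v x + ε * ∂ₓ[4] v x
      + 6 * ∂ₓ[1] v x ^ 3 + 18 * v x * ∂ₓ[1] v x * ∂ₓ[2] v x + 3 * v x ^ 2 * ∂ₓ[3] v x := by
  have d0 := hasDerivAt_iteratedDeriv (n := 5) (k := 0) hv (by norm_num) x
  have d1 := hasDerivAt_iteratedDeriv (n := 5) (k := 1) hv (by norm_num) x
  have d2 := hasDerivAt_iteratedDeriv (n := 5) (k := 2) hv (by norm_num) x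
  have d3 := hasDerivAt_iteratedDeriv (n := 5) (k := 3) hv (by norm_num) x
  have d4 := hasDerivAt_iteratedDeriv (n := 5) (k := 4) hv (by norm_num) x
  rw [iteratedDeriv_zero] at d0
  rw [iteratedDeriv_succ, funext (iteratedDeriv_one_mkdvBurgersField (hv.of_le (by norm_num)))]
  refine ((((d4.fun_neg.fun_add (d3.const_mul ε)).fun_add
    ((d0.const_mul 6).fun_mul (d1.fun_pow 2))).fun_add
    (((d0.fun_pow 2).const_mul 3).fun_mul d2)).congr_deriv ?_).deriv
  push_cast
  ring

lemma hasDerivAt_h1Flux (hv : ContDiff ℝ 4 v) (x : ℝ) :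
    HasDerivAt (h1Flux ε v)
      (v x * mkdvBurgersField ε v x + ∂ₓ[1] v x * ∂ₓ[1] (mkdvBurgersField ε v) x
        + v x ^ 3 * mkdvBurgersField ε v x
        + ε * (∂ₓ[1] v x ^ 2 + ∂ₓ[2] v x ^ 2 + 3 * v x ^ 2 * ∂ₓ[1] v x ^ 2)) x := by
  have d0 := hasDerivAt_iteratedDeriv (n := 4) (k := 0) hv (by norm_num) x
  have d1 := hasDerivAt_iteratedDeriv (n := 4) (k := 1) hv (by norm_num) x
  have d2 := hasDerivAt_iteratedDeriv (n := 4) (k := 2) hv (by norm_num) x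
  have d3 := hasDerivAt_iteratedDeriv (n := 4) (k := 3) hv (by norm_num) x
  rw [iteratedDeriv_zero] at d0
  have m1 := ((d0.fun_mul d2).fun_neg.fun_add ((d1.fun_pow 2).div_const 2)).fun_add
    ((d0.fun_pow 4).const_mul (3 / 4))
  have m2 := ((m1.fun_add (d1.fun_mul d3).fun_neg).fun_add ((d2.fun_pow 2).div_const 2)).fun_add
    (((d0.fun_pow 2).fun_mul (d1.fun_pow 2)).const_mul 3)
  have m3 := (m2.fun_add ((d0.fun_pow 3).fun_mul d2).fun_neg).fun_add ((d0.fun_pow 6).div_const 2)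
  have viscous := ((d0.fun_mul d1).fun_add (d1.fun_mul d2)).fun_add ((d0.fun_pow 3).fun_mul d1)
  refine (m3.fun_add (viscous.const_mul ε)).congr_deriv ?_
  rw [iteratedDeriv_one_mkdvBurgersField hv, mkdvBurgersField]
  push_cast
  ring

lemma hasDerivAt_h2Flux (hv : ContDiff ℝ 5 v) (x : ℝ) :
    HasDerivAt (h2Flux ε v)
      (∂ₓ[2] v x * ∂ₓ[2] (mkdvBurgersField ε v) x
        + 5 * (v x * ∂ₓ[1] v x ^ 2 * mkdvBurgersField ε v x
          + v x ^ 2 * ∂ₓ[1] v x * ∂ₓ[1] (mkdvBurgersField ε v) x)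
        + 3 / 2 * v x ^ 5 * mkdvBurgersField ε v x
        + ε * (∂ₓ[3] v x ^ 2 + 5 * v x ^ 2 * ∂ₓ[2] v x ^ 2
          + 10 * v x * ∂ₓ[1] v x ^ 2 * ∂ₓ[2] v x + 5 / 3 * ∂ₓ[1] v x ^ 4
          + 15 / 2 * v x ^ 4 * ∂ₓ[1] v x ^ 2)) x := by
  have d0 := hasDerivAt_iteratedDeriv (n := 5) (k := 0) hv (by norm_num) x
  have d1 := hasDerivAt_iteratedDeriv (n := 5) (k := 1) hv (by norm_num) x
  have d2 := hasDerivAt_iteratedDeriv (n := 5) (k := 2) hv (by norm_num) x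
  have d3 := hasDerivAt_iteratedDeriv (n := 5) (k := 3) hv (by norm_num) x
  have d4 := hasDerivAt_iteratedDeriv (n := 5) (k := 4) hv (by norm_num) x
  rw [iteratedDeriv_zero] at d0
  have m1 := ((d2.fun_mul d4).fun_neg.fun_add ((d3.fun_pow 2).div_const 2)).fun_add
    ((d1.fun_pow 4).const_mul (1 / 4))
  have m2 := (m1.fun_add (((d0.fun_pow 2).fun_mul (d2.fun_pow 2)).const_mul 4)).fun_add
    ((((d0.fun_pow 2).fun_mul d1).fun_mul d3).const_mul (-5))
  have m3 := (m2.fun_add (((d0.fun_mul (d1.fun_pow 2)).fun_mul d2).const_mul 5)).fun_add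
    (((d0.fun_pow 5).fun_mul d2).const_mul (-(3 / 2)))
  have m4 := (m3.fun_add (((d0.fun_pow 4).fun_mul (d1.fun_pow 2)).const_mul (45 / 4))).fun_add
    ((d0.fun_pow 8).const_mul (9 / 16))
  have viscous := (((d2.fun_mul d3).fun_add
    ((((d0.fun_pow 2).fun_mul d1).fun_mul d2).const_mul 5)).fun_add
    (((d0.fun_pow 5).fun_mul d1).const_mul (3 / 2))).fun_add
    ((d0.fun_mul (d1.fun_pow 3)).const_mul (5 / 3))
  refine (m4.fun_add (viscous.const_mul ε)).congr_deriv ?_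
  rw [iteratedDeriv_two_mkdvBurgersField hv,
    iteratedDeriv_one_mkdvBurgersField (hv.of_le (by norm_num)), mkdvBurgersField]
  push_cast
  ring

end VectorField

/-- `u` is a `C⁵` solution, of period `ℓ` in space, of the modified KdV–Burgers equation
`∂ₜu + ∂ₓ³u - ε ∂ₓ²u = ∂ₓ(u³)` on the time interval `[0, T]`. The function `u` is defined for all
times, so the time derivatives at `0` and `T` are two-sided. -/
structure IsMKdVBurgersSolution (ε ℓ T : ℝ) (u : ℝ → ℝ → ℝ) : Prop where
  contDiff : ContDiff ℝ 5 (fun p : ℝ × ℝ => u p.1 p.2)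
  periodic : ∀ t, Function.Periodic (u t) ℓ
  equation : ∀ t ∈ Icc 0 T, ∀ x,
    deriv (fun s => u s x) t + ∂ₓ[3] (u t) x - ε * ∂ₓ[2] (u t) x = deriv (fun y => u t y ^ 3) x

namespace IsMKdVBurgersSolution

variable {ε ℓ T t : ℝ} {u : ℝ → ℝ → ℝ}

lemma contDiff_slice (hu : IsMKdVBurgersSolution ε ℓ T u) (t : ℝ) : ContDiff ℝ 5 (u t) :=
  hu.contDiff.comp (by fun_prop : ContDiff ℝ 5 fun x : ℝ => (t, x))

lemma contDiff_one_iteratedDeriv (hu : IsMKdVBurgersSolution ε ℓ T u) {k : ℕ} (hk : k < 5) :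
    ContDiff ℝ 1 (fun p : ℝ × ℝ => ∂ₓ[k] (u p.1) p.2) :=
  contDiff_iteratedDeriv_snd (n := 1) k (hu.contDiff.of_le (by exact_mod_cast (by lia)))

lemma iteratedDeriv_period (hu : IsMKdVBurgersSolution ε ℓ T u) (k : ℕ) (t : ℝ) :
    ∂ₓ[k] (u t) ℓ = ∂ₓ[k] (u t) 0 :=
  (periodic_iteratedDeriv (hu.periodic t) k).eq

lemma deriv_fst (hu : IsMKdVBurgersSolution ε ℓ T u) (ht : t ∈ Icc 0 T) (x : ℝ) :
    deriv (fun s => u s x) t = mkdvBurgersField ε (u t) x := by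
  have hcube : deriv (fun y => u t y ^ 3) x = 3 * u t x ^ 2 * ∂ₓ[1] (u t) x := by
    simpa using (((hu.contDiff_slice t).differentiable (by simp) x).hasDerivAt.fun_pow 3).deriv
  have hequation := hu.equation t ht x
  rw [mkdvBurgersField]
  linarith

lemma hasDerivAt_iteratedDeriv_fst (hu : IsMKdVBurgersSolution ε ℓ T u) (ht : t ∈ Icc 0 T)
    {k : ℕ} (hk : k < 5) (x : ℝ) :
    HasDerivAt (fun s => ∂ₓ[k] (u s) x) (∂ₓ[k] (mkdvBurgersField ε (u t)) x) t := by
  have hderiv : deriv (fun s => ∂ₓ[k] (u s) x) t = ∂ₓ[k] (mkdvBurgersField ε (u t)) x := by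
    rw [deriv_fst_iteratedDeriv_snd_comm (hu.contDiff.of_le (mod_cast hk)),
      funext (hu.deriv_fst ht)]
  rw [← hderiv]
  have hdiff : ContDiff ℝ 1 (fun s => ∂ₓ[k] (u s) x) :=
    (hu.contDiff_one_iteratedDeriv hk).comp (by fun_prop : ContDiff ℝ 1 fun s : ℝ => (s, x))
  exact (hdiff.differentiable (by simp) t).hasDerivAt

lemma hasDerivAt_h1Energy (hu : IsMKdVBurgersSolution ε ℓ T u) (ht : t ∈ Icc 0 T) :
    HasDerivAt (fun s => h1Energy ℓ (u s)) (-(ε * h1Dissipation ℓ (u t))) t := by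
  have hv := hu.contDiff_slice t
  have c0 : ContDiff ℝ 1 fun p : ℝ × ℝ => u p.1 p.2 := hu.contDiff.of_le (by norm_num)
  have c1 := hu.contDiff_one_iteratedDeriv (k := 1) (by norm_num)
  have s0 := hv.continuous
  have s2 := hv.continuous_iteratedDeriv 2 (by norm_num)
  rw [h1Dissipation, ← intervalIntegral.integral_const_mul]
  refine hasDerivAt_integral_of_balance_law (by fun_prop) (by fun_prop) (fun x => ?_)
    (hasDerivAt_h1Flux (hv.of_le (by norm_num))) ?_
  · have t0 := hu.hasDerivAt_iteratedDeriv_fst ht (k := 0) (by norm_num) x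
    have t1 := hu.hasDerivAt_iteratedDeriv_fst ht (k := 1) (by norm_num) x
    simp only [iteratedDeriv_zero] at t0
    refine ((((t0.fun_pow 2).div_const 2).fun_add ((t1.fun_pow 2).div_const 2)).fun_add
      ((t0.fun_pow 4).div_const 4)).congr_deriv ?_
    push_cast
    ring
  · simp only [h1Flux, hu.iteratedDeriv_period, (hu.periodic t).eq]

lemma hasDerivAt_h2Energy (hu : IsMKdVBurgersSolution ε ℓ T u) (ht : t ∈ Icc 0 T) :
    HasDerivAt (fun s => h2Energy ℓ (u s)) (-(ε * h2Dissipation ℓ (u t))) t := by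
  have hv := hu.contDiff_slice t
  have c0 : ContDiff ℝ 1 fun p : ℝ × ℝ => u p.1 p.2 := hu.contDiff.of_le (by norm_num)
  have c1 := hu.contDiff_one_iteratedDeriv (k := 1) (by norm_num)
  have c2 := hu.contDiff_one_iteratedDeriv (k := 2) (by norm_num)
  have s0 := hv.continuous
  have s2 := hv.continuous_iteratedDeriv 2 (by norm_num)
  have s3 := hv.continuous_iteratedDeriv 3 (by norm_num)
  rw [h2Dissipation, ← intervalIntegral.integral_const_mul]
  refine hasDerivAt_integral_of_balance_law (by fun_prop) (by fun_prop) (fun x => ?_)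
    (hasDerivAt_h2Flux hv) ?_
  · have t0 := hu.hasDerivAt_iteratedDeriv_fst ht (k := 0) (by norm_num) x
    have t1 := hu.hasDerivAt_iteratedDeriv_fst ht (k := 1) (by norm_num) x
    have t2 := hu.hasDerivAt_iteratedDeriv_fst ht (k := 2) (by norm_num) x
    simp only [iteratedDeriv_zero] at t0
    refine ((((t2.fun_pow 2).div_const 2).fun_add
      (((t0.fun_pow 2).fun_mul (t1.fun_pow 2)).const_mul (5 / 2))).fun_add
      ((t0.fun_pow 6).div_const 4)).congr_deriv ?_
    push_cast
    ring
  · simp only [h2Flux, hu.iteratedDeriv_period, (hu.periodic t).eq]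

lemma h1Energy_le (hu : IsMKdVBurgersSolution ε ℓ T u) (hℓ : 0 ≤ ℓ) (hε : 0 ≤ ε)
    (ht : t ∈ Icc 0 T) : h1Energy ℓ (u t) ≤ h1Energy ℓ (u 0) := by
  refine antitoneOn_of_hasDerivWithinAt_nonpos (f := fun s => h1Energy ℓ (u s)) (convex_Icc 0 T)
    (fun s hs => (hu.hasDerivAt_h1Energy hs).continuousAt.continuousWithinAt)
    (fun s hs => (hu.hasDerivAt_h1Energy (interior_subset hs)).hasDerivWithinAt)
    (fun s _ => neg_nonpos.2 (mul_nonneg hε ?_)) ⟨le_rfl, ht.1.trans ht.2⟩ ht ht.1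
  exact h1Dissipation_nonneg hℓ

lemma sq_le_h1Energy (hu : IsMKdVBurgersSolution ε ℓ T u) (hℓ : 0 < ℓ) (hε : 0 ≤ ε)
    (ht : t ∈ Icc 0 T) (x : ℝ) : u t x ^ 2 ≤ (ℓ⁻¹ + 1) * (2 * h1Energy ℓ (u 0)) := by
  have hv : ContDiff ℝ 1 (u t) := (hu.contDiff_slice t).of_le (by norm_num)
  calc u t x ^ 2 ≤ (ℓ⁻¹ + 1) * sobolevNormSq ℓ 1 (u t) :=
        sq_le_sobolevNormSq_one hℓ hv (hu.periodic t) x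
    _ ≤ (ℓ⁻¹ + 1) * (2 * h1Energy ℓ (u t)) := by
        gcongr
        exact sobolevNormSq_one_le_h1Energy hℓ.le hv
    _ ≤ (ℓ⁻¹ + 1) * (2 * h1Energy ℓ (u 0)) := by
        gcongr
        exact hu.h1Energy_le hℓ.le hε ht

lemma sobolevNormSq_zero_le (hu : IsMKdVBurgersSolution ε ℓ T u) (hℓ : 0 ≤ ℓ) (hε : 0 ≤ ε)
    (ht : t ∈ Icc 0 T) : sobolevNormSq ℓ 0 (u t) ≤ 2 * h1Energy ℓ (u 0) := by
  have hv : ContDiff ℝ 1 (u t) := (hu.contDiff_slice t).of_le (by norm_num)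
  calc sobolevNormSq ℓ 0 (u t) ≤ sobolevNormSq ℓ 1 (u t) := sobolevNormSq_mono hℓ zero_le_one hv
    _ ≤ 2 * h1Energy ℓ (u t) := sobolevNormSq_one_le_h1Energy hℓ hv
    _ ≤ 2 * h1Energy ℓ (u 0) := by
        gcongr
        exact hu.h1Energy_le hℓ hε ht

lemma h2Energy_add_integral_le (hu : IsMKdVBurgersSolution ε ℓ T u) (hℓ : 0 ≤ ℓ) (hε : 0 ≤ ε)
    {N : ℝ} (hN : ∀ t ∈ Icc 0 T, ∀ x, u t x ^ 2 ≤ N) (ht : t ∈ Icc 0 T) :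
    h2Energy ℓ (u t) + (1 + 10 * N) * h1Energy ℓ (u t)
        + ε * ∫ τ in (0 : ℝ)..t, sobolevNormSq ℓ 3 (u τ) ≤
      h2Energy ℓ (u 0) + (1 + 10 * N) * h1Energy ℓ (u 0) + ε * t * (2 * h1Energy ℓ (u 0)) := by
  have hsub : Icc 0 t ⊆ Icc 0 T := Icc_subset_Icc_right ht.2
  have hderiv {s : ℝ} (hs : s ∈ Icc 0 t) :=
    (hu.hasDerivAt_h2Energy (hsub hs)).fun_add
      ((hu.hasDerivAt_h1Energy (hsub hs)).const_mul (1 + 10 * N))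
  have hcont : Continuous fun s => sobolevNormSq ℓ 3 (u s) :=
    continuous_sobolevNormSq (hu.contDiff.of_le (by norm_num))
  have hdecay : ∀ s ∈ Ioo 0 t, -(ε * h2Dissipation ℓ (u s))
      + (1 + 10 * N) * -(ε * h1Dissipation ℓ (u s)) ≤
      ε * (2 * h1Energy ℓ (u 0) - sobolevNormSq ℓ 3 (u s)) := fun s hs => by
    have hs := hsub (Ioo_subset_Icc_self hs)
    have hdiss := sobolevNormSq_three_sub_le_dissipation hℓ
      ((hu.contDiff_slice s).of_le (by norm_num)) (hN s hs)
    have hzero := hu.sobolevNormSq_zero_le hℓ hε hs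
    have hrate : -(h2Dissipation ℓ (u s) + (1 + 10 * N) * h1Dissipation ℓ (u s)) ≤
        2 * h1Energy ℓ (u 0) - sobolevNormSq ℓ 3 (u s) := by linarith
    linarith [mul_le_mul_of_nonneg_left hrate hε]
  have hgrowth := sub_le_integral_of_hasDeriv_right_of_le ht.1
    (fun s hs => (hderiv hs).continuousAt.continuousWithinAt)
    (fun s hs => (hderiv (Ioo_subset_Icc_self hs)).hasDerivWithinAt)
    (Continuous.integrableOn_Icc (by fun_prop)) hdecay
  rw [intervalIntegral.integral_const_mul, integral_sub (by simp) (hcont.intervalIntegrable _ _),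
    intervalIntegral.integral_const, smul_eq_mul, sub_zero] at hgrowth
  linarith

lemma sobolevNormSq_two_add_integral_le (hu : IsMKdVBurgersSolution ε ℓ T u) (hℓ : 0 < ℓ)
    (hε : 0 ≤ ε) {Q : ℝ} (hQ₁ : h1Energy ℓ (u 0) ≤ Q) (hQ₂ : h2Energy ℓ (u 0) ≤ Q)
    (ht : t ∈ Icc 0 T) :
    sobolevNormSq ℓ 2 (u t) + ε * ∫ τ in (0 : ℝ)..t, sobolevNormSq ℓ 3 (u τ) ≤
      2 * (Q + (1 + 10 * ((ℓ⁻¹ + 1) * (2 * Q))) * Q + ε * t * (2 * Q)) := by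
  have hQ0 : 0 ≤ Q := (h1Energy_nonneg hℓ.le).trans hQ₁
  set N := (ℓ⁻¹ + 1) * (2 * Q)
  have hN : ∀ t ∈ Icc 0 T, ∀ x, u t x ^ 2 ≤ N := fun t ht x =>
    (hu.sq_le_h1Energy hℓ hε ht x).trans
      (mul_le_mul_of_nonneg_left (by linarith) (by positivity))
  have hviscous : 0 ≤ ε * ∫ τ in (0 : ℝ)..t, sobolevNormSq ℓ 3 (u τ) :=
    mul_nonneg hε (integral_nonneg ht.1 fun _ _ => sobolevNormSq_nonneg hℓ.le 3)
  have hextra : 0 ≤ 10 * N * h1Energy ℓ (u t) :=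
    mul_nonneg (by positivity) (h1Energy_nonneg hℓ.le)
  have ht0 : 0 ≤ t := ht.1
  calc sobolevNormSq ℓ 2 (u t) + ε * ∫ τ in (0 : ℝ)..t, sobolevNormSq ℓ 3 (u τ)
      ≤ 2 * (h2Energy ℓ (u t) + h1Energy ℓ (u t))
          + ε * ∫ τ in (0 : ℝ)..t, sobolevNormSq ℓ 3 (u τ) := by
        gcongr
        exact sobolevNormSq_two_le_h2Energy_add_h1Energy hℓ.le
          ((hu.contDiff_slice t).of_le (by norm_num))
    _ ≤ 2 * (h2Energy ℓ (u t) + (1 + 10 * N) * h1Energy ℓ (u t)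
          + ε * ∫ τ in (0 : ℝ)..t, sobolevNormSq ℓ 3 (u τ)) := by linarith
    _ ≤ 2 * (h2Energy ℓ (u 0) + (1 + 10 * N) * h1Energy ℓ (u 0)
          + ε * t * (2 * h1Energy ℓ (u 0))) := by
        gcongr 2 * ?_
        exact hu.h2Energy_add_integral_le hℓ.le hε hN ht
    _ ≤ 2 * (Q + (1 + 10 * N) * Q + ε * t * (2 * Q)) := by gcongr

lemma exists_sobolevNormSq_two_add_integral_le (hℓ : 0 < ℓ) (ε₀ T M : ℝ) :
    ∃ P, ∀ ε ∈ Icc 0 ε₀, ∀ u, IsMKdVBurgersSolution ε ℓ T u → sobolevNormSq ℓ 2 (u 0) ≤ M →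
      ∀ t ∈ Icc 0 T,
        sobolevNormSq ℓ 2 (u t) + ε * ∫ τ in (0 : ℝ)..t, sobolevNormSq ℓ 3 (u τ) ≤ P := by
  obtain ⟨Q, hQ⟩ := exists_energy_bound hℓ M
  refine ⟨2 * (Q + (1 + 10 * ((ℓ⁻¹ + 1) * (2 * Q))) * Q + ε₀ * T * (2 * Q)),
    fun ε hε u hu hM t ht => ?_⟩
  obtain ⟨hQ₁, hQ₂⟩ := hQ (u 0) ((hu.contDiff_slice 0).of_le (by norm_num)) (hu.periodic 0) hM
  have hQ0 : 0 ≤ Q := (h1Energy_nonneg hℓ.le).trans hQ₁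
  have hεt : ε * t ≤ ε₀ * T := mul_le_mul hε.2 ht.2 ht.1 (hε.1.trans hε.2)
  exact (hu.sobolevNormSq_two_add_integral_le hℓ hε.1 hQ₁ hQ₂ ht).trans (by gcongr)

end IsMKdVBurgersSolution

theorem stmt18_general {ℓ : ℝ} (hℓ : 0 < ℓ) (ε₀ T R : ℝ) :
    ∃ C : ℝ, 0 < C ∧ ∀ ε ∈ Icc 0 ε₀, ∀ u : ℝ → ℝ → ℝ, IsMKdVBurgersSolution ε ℓ T u →
      sobolevNormSq ℓ 2 (u 0) ≤ R ^ 2 → ∀ t ∈ Icc 0 T,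
        √(sobolevNormSq ℓ 2 (u t)) + √ε * √(∫ τ in (0 : ℝ)..T, sobolevNormSq ℓ 3 (u τ)) ≤ C := by
  obtain ⟨P, hP⟩ :=
    IsMKdVBurgersSolution.exists_sobolevNormSq_two_add_integral_le hℓ ε₀ T (R ^ 2)
  refine ⟨√P + √P + 1, by positivity, fun ε hε u hu hR t ht => ?_⟩
  have hT : 0 ≤ T := ht.1.trans ht.2
  have hintegral {s : ℝ} (hs : 0 ≤ s) : 0 ≤ ε * ∫ τ in (0 : ℝ)..s, sobolevNormSq ℓ 3 (u τ) :=
    mul_nonneg hε.1 (integral_nonneg hs fun _ _ => sobolevNormSq_nonneg hℓ.le 3)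
  have hsup : sobolevNormSq ℓ 2 (u t) ≤ P :=
    (le_add_of_nonneg_right (hintegral ht.1)).trans (hP ε hε u hu hR t ht)
  have hviscous : ε * ∫ τ in (0 : ℝ)..T, sobolevNormSq ℓ 3 (u τ) ≤ P :=
    (le_add_of_nonneg_left (sobolevNormSq_nonneg hℓ.le 2)).trans
      (hP ε hε u hu hR T ⟨hT, le_rfl⟩)
  rw [← Real.sqrt_mul hε.1]
  linarith [Real.sqrt_le_sqrt hsup, Real.sqrt_le_sqrt hviscous]

open Real in
theorem stmt18 (T R : ℝ) (hT : 0 < T) (hR : 0 < R) :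
    ∃ C : ℝ, 0 < C ∧
      ∀ ε : ℝ, ε ∈ Set.Ioc (0 : ℝ) 1 →
        ∀ u : ℝ → ℝ → ℝ,
          ContDiff ℝ (⊤ : ℕ∞) (fun p : ℝ × ℝ => u p.1 p.2) →
          (∀ t x : ℝ, u t (x + 2 * π) = u t x) →
          (∀ t ∈ Set.Icc (0 : ℝ) T, ∀ x : ℝ,
            deriv (fun τ => u τ x) t + iteratedDeriv 3 (u t) x -
                ε * iteratedDeriv 2 (u t) x =
              deriv (fun y => (u t y) ^ 3) x) →
          (∫ x in (0 : ℝ)..(2 * π),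
              ((u 0 x) ^ 2 + (deriv (u 0) x) ^ 2 + (iteratedDeriv 2 (u 0) x) ^ 2)) ≤ R ^ 2 →
          ∀ t ∈ Set.Icc (0 : ℝ) T,
            Real.sqrt (∫ x in (0 : ℝ)..(2 * π),
                ((u t x) ^ 2 + (deriv (u t) x) ^ 2 + (iteratedDeriv 2 (u t) x) ^ 2)) +
                Real.sqrt ε *
                  Real.sqrt (∫ τ in (0 : ℝ)..T, ∫ x in (0 : ℝ)..(2 * π),
                    ((u τ x) ^ 2 + (deriv (u τ) x) ^ 2 + (iteratedDeriv 2 (u τ) x) ^ 2 +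
                      (iteratedDeriv 3 (u τ) x) ^ 2)) ≤ C := by
  obtain ⟨C, hC, hbound⟩ := stmt18_general two_pi_pos 1 T R
  refine ⟨C, hC, fun ε hε u hu hper hequation hinit t ht => ?_⟩
  have hsol : IsMKdVBurgersSolution ε (2 * π) T u :=
    ⟨contDiff_infty.1 hu 5, hper, hequation⟩
  simpa [sobolevNormSq, Finset.sum_range_succ] using
    hbound ε (Set.Ioc_subset_Icc_self hε) u hsol
      (by simpa [sobolevNormSq, Finset.sum_range_succ] using hinit) t ht
end
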